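/- arXiv:1501.07316 — 15 statements merged into one kernel-verified Lean document; each statement's English description precedes it below -/
import Mathlib

section
/- Let O be a linearly ordered type, C a type, and F : O → O → C a function such that for every a ∈ O the map b ↦ F a b is injective on {b : b ≤ a}, and for every b ∈ O the map a ↦ F a b is injective on {a : a ≤ b}. Then F satisfies (*) (no monochromatic K_{2,2}). -/
universe u v

/-- `F` has no monochromatic `K_{2,2}`. -/
def NoMonoK22 {A B C : Type*} (F : A → B → C) : Prop :=
  ¬ ∃ (a₁ a₂ : A) (b₁ b₂ : B), a₁ ≠ a₂ ∧ b₁ ≠ b₂ ∧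
      F a₁ b₁ = F a₁ b₂ ∧ F a₁ b₁ = F a₂ b₁ ∧ F a₁ b₁ = F a₂ b₂

theorem stmt1 {O : Type u} [LinearOrder O] {C : Type v} (F : O → O → C)
    (h₁ : ∀ a : O, Set.InjOn (fun b => F a b) {b : O | b ≤ a})
    (h₂ : ∀ b : O, Set.InjOn (fun a => F a b) {a : O | a ≤ b}) :
    NoMonoK22 F := by
  rintro ⟨a₁, a₂, b₁, b₂, ha, hb, e1, e2, e3⟩
  have key : (b₁ ≤ a₁ ∧ b₂ ≤ a₁) ∨ (b₁ ≤ a₂ ∧ b₂ ≤ a₂) ∨ (a₁ ≤ b₁ ∧ a₂ ≤ b₁) ∨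
      (a₁ ≤ b₂ ∧ a₂ ≤ b₂) := by
    grind
  rcases key with ⟨p, q⟩ | ⟨p, q⟩ | ⟨p, q⟩ | ⟨p, q⟩
  · exact hb (h₁ a₁ p q e1)
  · exact hb (h₁ a₂ p q (e2.symm.trans e3))
  · exact ha (h₂ b₁ p q e2)
  · exact ha (h₂ b₂ p q (e1.symm.trans e3))
end

section
/- For every infinite cardinal κ, there exists a function F from (ordinals below κ⁺) × (ordinals below κ⁺) to the ordinals below κ such that F α α = 0 for every α, the map β ↦ F α β is injective on {β : β ≤ α} for every α, the map α ↦ F α β is injective on {α : α ≤ β} for every β, and F satisfies (*) (no monochromatic K_{2,2}). -/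
universe u

theorem stmt2 (κ : Cardinal.{u}) (hκ : Cardinal.aleph0 ≤ κ) :
    ∃ F : {o : Ordinal.{u} // o < (Order.succ κ).ord} →
          {o : Ordinal.{u} // o < (Order.succ κ).ord} → Ordinal.{u},
      (∀ α β, F α β < κ.ord) ∧
      (∀ α, F α α = 0) ∧
      (∀ α, Set.InjOn (fun β => F α β) {β | β ≤ α}) ∧
      (∀ β, Set.InjOn (fun α => F α β) {α | α ≤ β}) ∧
      NoMonoK22 F := by
  classical
  have he : ∀ α : {o : Ordinal.{u} // o < (Order.succ κ).ord},
      ∃ e : Ordinal.{u} → κ.out, Set.InjOn e (Set.Iio α.1) := by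
    intro α
    have h1 : α.1.card ≤ κ := Order.lt_succ_iff.1 (Cardinal.lt_ord.1 α.2)
    have h2 : Cardinal.lift.{u} (Cardinal.mk (Set.Iio α.1)) ≤
        Cardinal.lift.{u+1} (Cardinal.mk κ.out) := by
      rw [Cardinal.mk_Iio_ordinal, Cardinal.mk_out]
      rw [Cardinal.lift_lift, Cardinal.lift_le]
      exact h1
    obtain ⟨f⟩ := Cardinal.lift_mk_le'.1 h2
    have hne : Nonempty κ.out := by
      rw [← Cardinal.mk_ne_zero_iff, Cardinal.mk_out]
      exact (lt_of_lt_of_le Cardinal.aleph0_pos hκ).ne'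
    refine ⟨fun x => if h : x < α.1 then f ⟨x, h⟩ else Classical.arbitrary _, ?_⟩
    intro x hx y hy hxy
    have hx' : x < α.1 := hx
    have hy' : y < α.1 := hy
    simp only [hx', hy', dif_pos] at hxy
    exact congrArg Subtype.val (f.injective hxy)
  choose e he using he
  have h0 : (0 : Ordinal.{u}) < κ.ord := by
    rw [Cardinal.lt_ord]
    simpa using lt_of_lt_of_le Cardinal.aleph0_pos hκ
  have hg : ∃ g : Option (κ.out ⊕ κ.out) → Ordinal.{u}, Function.Injective g ∧
      (∀ x, g x < κ.ord) ∧ g none = 0 := by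
    have h2 : Cardinal.lift.{u+1} (Cardinal.mk (Option (κ.out ⊕ κ.out))) ≤
        Cardinal.lift.{u} (Cardinal.mk (Set.Iio κ.ord)) := by
      rw [Cardinal.mk_Iio_ordinal, Cardinal.mk_option, Cardinal.mk_sum]
      simp [Cardinal.add_eq_self hκ, Cardinal.add_one_eq hκ]
    obtain ⟨f⟩ := Cardinal.lift_mk_le'.1 h2
    refine ⟨fun x => (Equiv.swap (f none) ⟨0, h0⟩ (f x)).1, ?_, ?_, ?_⟩
    · intro x y hxy
      exact f.injective ((Equiv.swap _ _).injective (Subtype.ext hxy))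
    · intro x
      exact (Equiv.swap (f none) ⟨0, h0⟩ (f x)).2
    · simp
  obtain ⟨g, gi, gl, g0⟩ := hg
  let c : {o : Ordinal.{u} // o < (Order.succ κ).ord} →
      {o : Ordinal.{u} // o < (Order.succ κ).ord} → Option (κ.out ⊕ κ.out) := fun α β =>
    if β < α then some (.inl (e α β.1)) else if α < β then some (.inr (e β α.1)) else none
  have cd : ∀ α, c α α = none := fun α => by simp [c]
  have cl : ∀ α β, β < α → c α β = some (.inl (e α β.1)) := fun α β h => by simp [c, h]
  have cr : ∀ α β, α < β → c α β = some (.inr (e β α.1)) := fun α β h => by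
    simp [c, h, not_lt_of_gt h]
  have i1 : ∀ α, ∀ β ≤ α, ∀ β' ≤ α, c α β = c α β' → β = β' := by
    intro α β h β' h' hc
    rcases h.lt_or_eq with h | rfl <;> rcases h'.lt_or_eq with h' | rfl
    · rw [cl _ _ h, cl _ _ h'] at hc
      exact Subtype.ext (he α h h' (by simpa using hc))
    · rw [cl _ _ h, cd] at hc; simp at hc
    · rw [cl _ _ h', cd] at hc; simp at hc
    · rfl
  have i2 : ∀ β, ∀ α ≤ β, ∀ α' ≤ β, c α β = c α' β → α = α' := by
    intro α β h β' h' hc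
    rcases h.lt_or_eq with h | rfl <;> rcases h'.lt_or_eq with h' | rfl
    · rw [cr _ _ h, cr _ _ h'] at hc
      exact Subtype.ext (he α h h' (by simpa using hc))
    · rw [cr _ _ h, cd] at hc; simp at hc
    · rw [cr _ _ h', cd] at hc; simp at hc
    · rfl
  refine ⟨fun α β => g (c α β), fun _ _ => gl _, fun α => by simp only [cd, g0],
    fun α β h β' h' hc => i1 α β h β' h' (gi hc),
    fun α β h β' h' hc => i2 α β h β' h' (gi hc), ?_⟩
  rintro ⟨a, a', b, b', ha, hb, h1, h2, h3⟩
  replace h1 := gi h1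
  replace h2 := gi h2
  replace h3 := gi h3
  -- the largest of the four indices gives the contradiction
  rcases le_total (max a a') (max b b') with h | h
  · rcases le_total b b' with k | k
    · rw [max_eq_right k] at h
      exact ha (i2 b' a (le_trans (le_max_left _ _) h) a' (le_trans (le_max_right _ _) h)
        (h1.symm.trans h3))
    · rw [max_eq_left k] at h
      exact ha (i2 b a (le_trans (le_max_left _ _) h) a' (le_trans (le_max_right _ _) h) h2)
  · rcases le_total a a' with k | k
    · rw [max_eq_right k] at h
      exact hb (i1 a' b (le_trans (le_max_left _ _) h) b' (le_trans (le_max_right _ _) h)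
        (h2.symm.trans h3))
    · rw [max_eq_left k] at h
      exact hb (i1 a b (le_trans (le_max_left _ _) h) b' (le_trans (le_max_right _ _) h) h1)
end

section
/- For every infinite cardinal κ, there exist types A, B, C with #A = #B = κ⁺ and #C = κ and a function F : A → B → C that satisfies (*) (no monochromatic K_{2,2}) and is C-maximal (both A-inextensible and B-inextensible). -/
universe u

/-- Adjoining any new vertex to `B` would create a monochromatic `K_{2,2}`. -/
def BInextensible {A B C : Type*} (F : A → B → C) : Prop :=
  ∀ g : A → C, ∃ a₁ a₂ : A, a₁ ≠ a₂ ∧ ∃ b : B,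
    F a₁ b = F a₂ b ∧ F a₂ b = g a₁ ∧ g a₁ = g a₂

/-- Adjoining any new vertex to `A` would create a monochromatic `K_{2,2}`. -/
def AInextensible {A B C : Type*} (F : A → B → C) : Prop :=
  ∀ h : B → C, ∃ b₁ b₂ : B, b₁ ≠ b₂ ∧ ∃ a : A,
    F a b₁ = F a b₂ ∧ F a b₂ = h b₁ ∧ h b₁ = h b₂

/-- symmetrization of a lower-triangular array -/
def symRow {I C : Type u} [LinearOrder I] (R : I → I → C) (a b : I) : C :=
  R (max a b) (min a b)

/-- the triple `t` is to be handled at stage `β` -/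
def Handle {I C : Type u} [LinearOrder I] (R : I → I → C) (β : I) (t : I × I × C) : Prop :=
  t.1 ≠ t.2.1 ∧ t.1 < β ∧ t.2.1 < β ∧
    ¬ ∃ γ < β, symRow R γ t.1 = t.2.2 ∧ symRow R γ t.2.1 = t.2.2

theorem exists_rows {I C : Type u} [LinearOrder I] [WellFoundedLT I]
    (e : I → I × I × C) (r : I → C → I → C) :
    ∃ R : I → I → C, ∀ β,
      (Handle R β (e β) → ∀ u, R β u =
        open Classical in if u = (e β).1 ∨ u = (e β).2.1 then (e β).2.2 else r β (e β).2.2 u) ∧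
      (¬ Handle R β (e β) → ∀ u, R β u = r β (e β).2.2 u) := by
  classical
  let ext : (β : I) → ((γ : I) → γ < β → I → C) → I → I → C :=
    fun β R γ => if h : γ < β then R γ h else fun _ => (e β).2.2
  let G : (β : I) → ((γ : I) → γ < β → I → C) → I → C := fun β R u =>
    if Handle (ext β R) β (e β) then
      (if u = (e β).1 ∨ u = (e β).2.1 then (e β).2.2 else r β (e β).2.2 u)
    else r β (e β).2.2 u
  let R : I → I → C := (wellFounded_lt (α := I)).fix G
  have hR : ∀ β, R β = G β (fun γ _ => R γ) := fun β => WellFounded.fix_eq _ _ _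
  have hsym : ∀ β a b, a < β → b < β →
      symRow (ext β (fun γ _ => R γ)) a b = symRow R a b := by
    intro β a b ha hb
    simp [symRow, ext, ha, hb]
  have hH : ∀ β, Handle (ext β (fun γ _ => R γ)) β (e β) ↔ Handle R β (e β) := by
    intro β
    unfold Handle
    refine and_congr_right fun _ => and_congr_right fun h1 => and_congr_right fun h2 => ?_
    refine not_congr (exists_congr fun γ => and_congr_right fun hγ => ?_)
    rw [hsym β _ _ hγ h1, hsym β _ _ hγ h2]
  refine ⟨R, fun β => ⟨fun h u => ?_, fun h u => ?_⟩⟩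
  · rw [hR]; simp only [G]; rw [if_pos ((hH β).2 h)]
  · rw [hR]; simp only [G]; rw [if_neg (fun h' => h ((hH β).1 h'))]

theorem symRow_comm {I C : Type u} [LinearOrder I] (R : I → I → C) (a b : I) :
    symRow R a b = symRow R b a := by
  simp [symRow, max_comm, min_comm]

theorem symRow_of_le {I C : Type u} [LinearOrder I] (R : I → I → C) {a b : I} (h : b ≤ a) :
    symRow R a b = R a b := by
  simp [symRow, h]

theorem main_aux {I C : Type u} [LinearOrder I] [WellFoundedLT I]
    (e : I → I × I × C) (he : ∀ t x, ∃ β, x < β ∧ e β = t)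
    (r : I → C → I → C) (hr : ∀ β c, Set.InjOn (r β c) (Set.Iic β))
    (hrc : ∀ β c, ∀ u ≤ β, r β c u ≠ c) :
    ∃ F : I → I → C, (∀ a b, F a b = F b a) ∧ NoMonoK22 F ∧
      ∀ x y c, x ≠ y → ∃ γ, F γ x = c ∧ F γ y = c := by
  classical
  obtain ⟨R, hR⟩ := exists_rows e r
  -- equal colours in a row
  have key : ∀ β u v, u ≤ β → v ≤ β → u ≠ v → R β u = R β v →
      u < β ∧ v < β ∧ ∀ γ < β, ¬ (symRow R γ u = R β u ∧ symRow R γ v = R β u) := by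
    intro β u v hu hv huv h
    by_cases hH : Handle R β (e β)
    · have h1 := (hR β).1 hH
      obtain ⟨hne, hx, hy, hno⟩ := hH
      rw [h1 u, h1 v] at h
      rw [h1 u]
      have i1 := hrc β (e β).2.2 u hu
      have i2 := hrc β (e β).2.2 v hv
      by_cases hu' : u = (e β).1 ∨ u = (e β).2.1
      · by_cases hv' : v = (e β).1 ∨ v = (e β).2.1
        · rw [if_pos hu']
          rcases hu' with hu' | hu' <;> rcases hv' with hv' | hv'
          · exact absurd (hu'.trans hv'.symm) huv
          · subst hu' hv'
            exact ⟨hx, hy, fun γ hγ hh => hno ⟨γ, hγ, hh⟩⟩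
          · subst hu' hv'
            exact ⟨hy, hx, fun γ hγ hh => hno ⟨γ, hγ, hh.symm⟩⟩
          · exact absurd (hu'.trans hv'.symm) huv
        · rw [if_pos hu', if_neg hv'] at h
          exact absurd h.symm i2
      · by_cases hv' : v = (e β).1 ∨ v = (e β).2.1
        · rw [if_neg hu', if_pos hv'] at h
          exact absurd h i1
        · rw [if_neg hu', if_neg hv'] at h
          exact absurd (hr β _ hu hv h) huv
    · have h1 := (hR β).2 hH
      rw [h1, h1] at h
      exact absurd (hr β _ hu hv h) huv
  -- the vertex `a` is the largest
  have case1 : ∀ a a' b b', a ≠ a' → b ≠ b' → a' ≤ a → b ≤ a → b' ≤ a →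
      symRow R a b = symRow R a b' → symRow R a b = symRow R a' b →
      symRow R a b = symRow R a' b' → False := by
    intro a a' b b' ha hb h1 h2 h3 e1 e2 e3
    rw [symRow_of_le R h2] at e1 e2 e3
    rw [symRow_of_le R h3] at e1
    exact (key a b b' h2 h3 hb e1).2.2 a' (lt_of_le_of_ne h1 ha.symm) ⟨e2.symm, e3.symm⟩
  refine ⟨symRow R, symRow_comm R, ?_, ?_⟩
  · rintro ⟨a, a', b, b', ha, hb, e1, e2, e3⟩
    have c1 := symRow_comm R a b
    have c2 := symRow_comm R a b'
    have c3 := symRow_comm R a' b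
    have c4 := symRow_comm R a' b'
    have m : (a' ≤ a ∧ b ≤ a ∧ b' ≤ a) ∨ (a ≤ a' ∧ b ≤ a' ∧ b' ≤ a') ∨
        (b' ≤ b ∧ a ≤ b ∧ a' ≤ b) ∨ (b ≤ b' ∧ a ≤ b' ∧ a' ≤ b') := by
      rcases le_total a a' with h1 | h1 <;> rcases le_total b b' with h2 | h2
      · rcases le_total a' b' with h | h
        · exact Or.inr (Or.inr (Or.inr ⟨h2, h1.trans h, h⟩))
        · exact Or.inr (Or.inl ⟨h1, h2.trans h, h⟩)
      · rcases le_total a' b with h | h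
        · exact Or.inr (Or.inr (Or.inl ⟨h2, h1.trans h, h⟩))
        · exact Or.inr (Or.inl ⟨h1, h, h2.trans h⟩)
      · rcases le_total a b' with h | h
        · exact Or.inr (Or.inr (Or.inr ⟨h2, h, h1.trans h⟩))
        · exact Or.inl ⟨h1, h2.trans h, h⟩
      · rcases le_total a b with h | h
        · exact Or.inr (Or.inr (Or.inl ⟨h2, h, h1.trans h⟩))
        · exact Or.inl ⟨h1, h, h2.trans h⟩
    rcases m with ⟨m1, m2, m3⟩ | ⟨m1, m2, m3⟩ | ⟨m1, m2, m3⟩ | ⟨m1, m2, m3⟩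
    · exact case1 a a' b b' ha hb m1 m2 m3 e1 e2 e3
    · exact case1 a' a b b' ha.symm hb m1 m2 m3 (e2.symm.trans e3) e2.symm (e2.symm.trans e1)
    · refine case1 b b' a a' hb ha m1 m2 m3 ?_ ?_ ?_
      · rw [← c1, ← c3]; exact e2
      · rw [← c1, ← c2]; exact e1
      · rw [← c1, ← c4]; exact e3
    · refine case1 b' b a a' hb.symm ha m1 m2 m3 ?_ ?_ ?_
      · rw [← c2, ← c4]; exact e1.symm.trans e3
      · rw [← c2, ← c1]; exact e1.symm
      · rw [← c2, ← c3]; exact e1.symm.trans e2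
  · intro x y c hxy
    obtain ⟨β, hβ, hb⟩ := he (x, y, c) (max x y)
    have hx : x < β := (le_max_left _ _).trans_lt hβ
    have hy : y < β := (le_max_right _ _).trans_lt hβ
    by_cases hH : Handle R β (e β)
    · have h1 := (hR β).1 hH
      rw [hb] at h1
      refine ⟨β, ?_, ?_⟩
      · rw [symRow_of_le R hx.le, h1]; simp
      · rw [symRow_of_le R hy.le, h1]; simp
    · rw [hb] at hH
      by_contra hcon
      exact hH ⟨hxy, hx, hy, fun ⟨γ, _, h⟩ => hcon ⟨γ, h⟩⟩

theorem stmt3 (κ : Cardinal.{u}) (hκ : Cardinal.aleph0 ≤ κ) :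
    ∃ (A B C : Type u) (F : A → B → C),
      Cardinal.mk A = Order.succ κ ∧ Cardinal.mk B = Order.succ κ ∧
      Cardinal.mk C = κ ∧
      NoMonoK22 F ∧ AInextensible F ∧ BInextensible F := by
  classical
  let I : Type u := (Order.succ κ).ord.ToType
  let C : Type u := κ.out
  have hI : Cardinal.mk I = Order.succ κ := Cardinal.mk_ord_toType _
  have hC : Cardinal.mk C = κ := Cardinal.mk_out κ
  have hsκ : Cardinal.aleph0 ≤ Order.succ κ := hκ.trans (Order.le_succ κ)
  have hIic : ∀ β : I, Cardinal.mk (Set.Iic β) ≤ κ := by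
    intro β
    have h1 : Cardinal.mk (Set.Iio β) < Order.succ κ := Cardinal.mk_Iio_toType_ord_lt β
    have h2 : Cardinal.mk (Set.Iio β) ≤ κ := Order.lt_succ_iff.1 h1
    rw [← Set.Iio_insert]
    calc _ ≤ Cardinal.mk (Set.Iio β) + 1 := Cardinal.mk_insert_le
      _ ≤ κ + κ := add_le_add h2 (Cardinal.one_le_aleph0.trans hκ)
      _ = κ := Cardinal.add_eq_self hκ
  have hCne : Nonempty C := by
    rw [← Cardinal.mk_ne_zero_iff, hC]
    exact (Cardinal.aleph0_pos.trans_le hκ).ne'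
  have hr : ∀ (β : I) (c : C), ∃ r : I → C, Set.InjOn r (Set.Iic β) ∧ ∀ u ≤ β, r u ≠ c := by
    intro β c
    have h1 : Cardinal.mk (Set.Iic β) ≤ Cardinal.mk ({c}ᶜ : Set C) := by
      have : Infinite C := by rw [Cardinal.infinite_iff, hC]; exact hκ
      rw [Cardinal.mk_compl_of_infinite, hC]
      · exact hIic β
      · rw [Cardinal.mk_singleton, hC]
        exact Cardinal.one_lt_aleph0.trans_le hκ
    obtain ⟨f⟩ := h1
    refine ⟨fun u => if h : u ≤ β then (f ⟨u, h⟩ : C) else c, ?_, ?_⟩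
    · intro u hu v hv h
      simp only [Set.mem_Iic] at hu hv
      simp only [hu, hv, dif_pos] at h
      have := f.injective (Subtype.ext h)
      exact congrArg Subtype.val this
    · intro u hu
      simp only [hu, dif_pos]
      exact (f ⟨u, hu⟩).2
  choose r hr hrc using hr
  have he : ∃ e : I → I × I × C, ∀ t x, ∃ β, x < β ∧ e β = t := by
    have h1 : Cardinal.mk I = Cardinal.mk (I × (I × I × C)) := by
      have h3 : Order.succ κ * κ = Order.succ κ :=
        Cardinal.mul_eq_left hsκ (Order.le_succ κ) (Cardinal.aleph0_pos.trans_le hκ).ne'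
      simp only [Cardinal.mk_prod, Cardinal.lift_id, hI, hC, h3, Cardinal.mul_eq_self hsκ]
    obtain ⟨φ⟩ := Cardinal.eq.1 h1
    refine ⟨fun i => (φ i).2, fun t x => ?_⟩
    by_contra hcon
    push Not at hcon
    have : Cardinal.mk I ≤ Cardinal.mk (Set.Iic x) := by
      refine Cardinal.mk_le_of_injective (f := fun i => ⟨φ.symm (i, t), ?_⟩) ?_
      · by_contra h
        exact hcon _ (not_le.1 h) (by simp)
      · intro i j h
        simpa using h
    rw [hI] at this
    exact absurd (this.trans (hIic x)) (not_le.2 (Order.lt_succ κ))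
  obtain ⟨e, he⟩ := he
  obtain ⟨F, hsym, hno, hpair⟩ := main_aux e he r hr hrc
  have hg : ∀ g : I → C, ∃ x y, x ≠ y ∧ ∃ γ, F γ x = F γ y ∧ F γ y = g x ∧ g x = g y := by
    intro g
    have : ¬ Function.Injective g := by
      intro hinj
      have := Cardinal.mk_le_of_injective hinj
      rw [hI, hC] at this
      exact absurd this (not_le.2 (Order.lt_succ κ))
    simp only [Function.Injective] at this
    push Not at this
    obtain ⟨x, y, hxy, hne⟩ := this
    obtain ⟨γ, h1, h2⟩ := hpair x y (g x) hne
    exact ⟨x, y, hne, γ, h1.trans h2.symm, h2, hxy⟩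
  refine ⟨I, I, C, F, hI, hI, hC, hno, hg, fun g => ?_⟩
  obtain ⟨x, y, hne, γ, h1, h2, h3⟩ := hg g
  exact ⟨x, y, hne, γ, by rw [hsym x, hsym y]; exact h1, by rw [hsym y]; exact h2, h3⟩
end

section
/- Let κ be an infinite cardinal, let O be the ordinals below κ⁺, let C be a type, and let F : O → O → C be a function satisfying (*) (no monochromatic K_{2,2}) such that for every ordinal α with κ ≤ α < κ⁺ and every c ∈ C there exists β < α with F α β = c. Then F is B-inextensible: for every g : O → C there exist α₁ ≠ α₂ in O and β ∈ O with F α₁ β = F α₂ β = g α₁ = g α₂. -/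
universe u v

theorem aux_bdd (κ : Cardinal.{u}) (hκ : Cardinal.aleph0 ≤ κ)
    (T : Set {o : Ordinal.{u} // o < (Order.succ κ).ord})
    (hT : Cardinal.mk T ≤ Cardinal.lift.{u+1} κ) :
    ∃ δ : {o : Ordinal.{u} // o < (Order.succ κ).ord}, ∀ t ∈ T, t ≤ δ := by
  have hmk : Cardinal.mk (Subtype.val '' T : Set Ordinal.{u}) ≤ Cardinal.lift.{u+1} κ :=
    Cardinal.mk_image_le.trans hT
  have : Small.{u} (Subtype.val '' T : Set Ordinal.{u}) := by
    rw [Cardinal.small_iff_lift_mk_lt_univ]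
    refine lt_of_le_of_lt (Cardinal.lift_le.2 hmk) ?_
    simpa using Cardinal.lift_lt_univ κ
  have hreg := (Cardinal.isRegular_succ hκ)
  refine ⟨⟨sSup (Subtype.val '' T), ?_⟩, ?_⟩
  · apply Ordinal.sSup_lt_of_lt_cof
    · rw [← Ordinal.lift_cof, hreg.cof_ord]
      refine lt_of_le_of_lt hmk ?_
      exact Cardinal.lift_lt.2 (Order.lt_succ κ)
    · rintro _ ⟨t, -, rfl⟩
      exact t.2
  · intro t ht
    exact le_csSup (Ordinal.bddAbove_of_small) ⟨t, ht, rfl⟩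

theorem aux_Iic (κ : Cardinal.{u}) (m : {o : Ordinal.{u} // o < (Order.succ κ).ord})
    (hκ : Cardinal.aleph0 ≤ κ) :
    Cardinal.mk (Set.Iic m) ≤ Cardinal.lift.{u+1} κ := by
  have h1 : Cardinal.mk (Set.Iic m) ≤ Cardinal.mk (Set.Iio (Order.succ m.1)) := by
    refine Cardinal.mk_le_of_injective
      (f := fun x => ⟨x.1.1, Set.mem_Iio.2 (Order.lt_succ_of_le (show x.1.1 ≤ m.1 from x.2))⟩) ?_
    intro x y h
    simp only [Subtype.mk.injEq] at h
    exact Subtype.ext (Subtype.ext h)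
  refine h1.trans ?_
  rw [Cardinal.mk_Iio_ordinal, Cardinal.lift_le]
  have := (Cardinal.isSuccLimit_ord (hκ.trans (Order.le_succ κ))).succ_lt m.2
  rwa [Cardinal.lt_ord, Order.lt_succ_iff] at this

theorem stmt4 (κ : Cardinal.{u}) (hκ : Cardinal.aleph0 ≤ κ) {C : Type v}
    (F : {o : Ordinal.{u} // o < (Order.succ κ).ord} →
         {o : Ordinal.{u} // o < (Order.succ κ).ord} → C)
    (hF : NoMonoK22 F)
    (honto : ∀ α : {o : Ordinal.{u} // o < (Order.succ κ).ord},
      κ.ord ≤ α.1 → ∀ c : C, ∃ β, β < α ∧ F α β = c) :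
    BInextensible F := by
  intro g
  by_contra hcon
  let K : {o : Ordinal.{u} // o < (Order.succ κ).ord} :=
    ⟨κ.ord, Cardinal.ord_lt_ord.2 (Order.lt_succ κ)⟩
  choose j hjlt hj using honto K le_rfl
  have hjinj : Function.Injective j := fun a b h => by rw [← hj a, ← hj b, h]
  have hex : ∀ α, ∃ β, K ≤ α → β < α ∧ F α β = g α := by
    intro α
    by_cases h : K ≤ α
    · obtain ⟨β, hβ⟩ := honto α h (g α)
      exact ⟨β, fun _ => hβ⟩
    · exact ⟨α, fun h' => absurd h' h⟩
  choose f hf using hex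
  have hinj : ∀ a b, K ≤ a → K ≤ b → f a = f b → g a = g b → a = b := by
    intro a b ha hb h1 h2
    by_contra hne
    refine hcon ⟨a, b, hne, f a, ?_, ?_, h2⟩
    · rw [(hf a ha).2, h1, (hf b hb).2, h2]
    · rw [h1, (hf b hb).2, h2]
  have hH : ∀ γ, ∃ δ, ∀ α, K ≤ α → f α ≤ γ → α ≤ δ := by
    intro γ
    obtain ⟨δ, hδ⟩ := aux_bdd κ hκ {α | K ≤ α ∧ f α ≤ γ} (by
      have h : Cardinal.mk {α | K ≤ α ∧ f α ≤ γ} ≤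
          Cardinal.mk (Set.Iic γ × Set.Iic K) := by
        refine Cardinal.mk_le_of_injective
          (f := fun x => (⟨f x.1, x.2.2⟩, ⟨j (g x.1), (hjlt _).le⟩)) ?_
        intro x y h
        simp only [Prod.mk.injEq] at h
        exact Subtype.ext (hinj _ _ x.2.1 y.2.1 (congrArg Subtype.val h.1)
          (hjinj (congrArg Subtype.val h.2)))
      refine h.trans ?_
      rw [Cardinal.mk_prod, Cardinal.lift_id, Cardinal.lift_id]
      refine (mul_le_mul' (aux_Iic κ γ hκ) (aux_Iic κ K hκ)).trans ?_
      rw [Cardinal.mul_eq_self (by simpa using hκ)])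
    exact ⟨δ, fun α h1 h2 => hδ α ⟨h1, h2⟩⟩
  choose H hH using hH
  have hS : ∀ x : {o : Ordinal.{u} // o < (Order.succ κ).ord}, ∃ y, x < y := fun x =>
    ⟨⟨Order.succ x.1,
      (Cardinal.isSuccLimit_ord (hκ.trans (Order.le_succ κ))).succ_lt x.2⟩,
      Order.lt_succ x.1⟩
  choose S hS using hS
  let d : ℕ → {o : Ordinal.{u} // o < (Order.succ κ).ord} :=
    fun n => Nat.rec K (fun _ x => S (H x)) n
  obtain ⟨B, hB⟩ := aux_bdd κ hκ (Set.range d) (by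
    refine (Cardinal.mk_le_aleph0_iff.2 (Set.countable_range d).to_subtype).trans ?_
    simpa using hκ)
  have hne : {x | ∀ n, d n ≤ x}.Nonempty := ⟨B, fun n => hB _ ⟨n, rfl⟩⟩
  obtain ⟨δ, hδ, hmin⟩ := WellFounded.has_min (wellFounded_lt
    (α := {o : Ordinal.{u} // o < (Order.succ κ).ord})) _ hne
  have hK : K ≤ δ := hδ 0
  have hlt := (hf δ hK).1
  have : ∃ n, f δ < d n := by
    refine Classical.byContradiction fun hno => ?_
    exact hmin _ (fun n => not_lt.1 fun h => hno ⟨n, h⟩) hlt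
  obtain ⟨n, hn⟩ := this
  have h1 : δ ≤ H (d n) := hH _ δ hK hn.le
  have h2 : S (H (d n)) ≤ δ := hδ (n+1)
  exact absurd (hS (H (d n))) (not_lt.2 (h2.trans h1))
end

section
/- For every infinite cardinal κ, there exist types A, B, C with #A = #B = κ⁺ and #C = κ and a function F : A → B → C satisfying (*) (no monochromatic K_{2,2}) together with (‡): for all a ≠ a' in A and every c ∈ C there exists b ∈ B with F a b = F a' b = c, and for all b ≠ b' in B and every c ∈ C there exists a ∈ A with F a b = F a b' = c. -/
universe u

theorem stmt6_core {I C : Type u} [LinearOrder I] [WellFoundedLT I] (h : I → I × I × C)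
    (inj : ∀ (ξ : I) (c : C), ∃ g : I → C, Set.InjOn g (Set.Iic ξ) ∧ ∀ u ≤ ξ, g u ≠ c)
    (hh : ∀ x y c, ∃ ξ, x < ξ ∧ y < ξ ∧ h ξ = (x, y, c)) :
    ∃ F : I → I → C, (∀ a b, F a b = F b a) ∧ NoMonoK22 F ∧
      (∀ a a' : I, a ≠ a' → ∀ c : C, ∃ b : I, F a b = c ∧ F a' b = c) := by
  classical
  choose g ginj gne using inj
  -- bad: the demand is already satisfied
  let Good : I → (I → I → C) → Prop := fun ξ p =>
    ∃ z < ξ, p (max (h ξ).1 z) (min (h ξ).1 z) = (h ξ).2.2 ∧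
      p (max (h ξ).2.1 z) (min (h ξ).2.1 z) = (h ξ).2.2
  let val : I → (I → I → C) → I → C := fun ξ p u =>
    if ((h ξ).1 < ξ ∧ (h ξ).2.1 < ξ ∧ ¬ Good ξ p) ∧ (u = (h ξ).1 ∨ u = (h ξ).2.1) then (h ξ).2.2
    else g ξ (h ξ).2.2 u
  let ext : (ξ : I) → ((η : I) → η < ξ → I → C) → I → I → C := fun ξ prev η =>
    if hη : η < ξ then prev η hη else fun _ => (h ξ).2.2
  let f : I → I → C := (wellFounded_lt (α := I)).fix (fun ξ prev => val ξ (ext ξ prev))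
  have hf0 : ∀ ξ, f ξ = val ξ (ext ξ (fun η _ => f η)) := fun ξ =>
    (wellFounded_lt (α := I)).fix_eq (fun ξ prev => val ξ (ext ξ prev)) ξ
  have hG : ∀ ξ, (h ξ).1 < ξ → (h ξ).2.1 < ξ →
      (Good ξ (ext ξ (fun η _ => f η)) ↔ Good ξ f) := by
    intro ξ h1 h2
    refine exists_congr fun z => and_congr_right fun hz => ?_
    simp only [ext, dif_pos (max_lt h1 hz), dif_pos (max_lt h2 hz)]
  have hf : ∀ ξ, f ξ = val ξ f := by
    intro ξ
    rw [hf0]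
    funext u
    by_cases h1 : (h ξ).1 < ξ <;> by_cases h2 : (h ξ).2.1 < ξ <;>
      simp only [val, h1, h2, false_and, and_false, true_and, if_false]
    simp only [hG ξ h1 h2]
  have key : ∀ ξ u v, u ≤ ξ → v ≤ ξ → u ≠ v → f ξ u = f ξ v →
      u < ξ ∧ v < ξ ∧ ∀ z < ξ, f (max u z) (min u z) = f ξ u → 
        f (max v z) (min v z) = f ξ u → False := by
    intro ξ u v hu hv huv he
    have gi : g ξ (h ξ).2.2 u ≠ g ξ (h ξ).2.2 v := fun e => huv (ginj ξ _ hu hv e)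
    have g1 := gne ξ (h ξ).2.2 u hu
    have g2 := gne ξ (h ξ).2.2 v hv
    by_cases hc : (h ξ).1 < ξ ∧ (h ξ).2.1 < ξ ∧ ¬ Good ξ f
    · rw [hf ξ] at he ⊢
      simp only [val] at he ⊢
      by_cases cu : u = (h ξ).1 ∨ u = (h ξ).2.1 <;> by_cases cv : v = (h ξ).1 ∨ v = (h ξ).2.1
      · rw [if_pos ⟨hc, cu⟩]
        obtain ⟨c1, c2, c3⟩ := hc
        rcases cu with cu | cu <;> rcases cv with cv | cv
        · exact absurd (cu.trans cv.symm) huv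
        · subst cu; subst cv
          exact ⟨c1, c2, fun z hz e1 e2 => c3 ⟨z, hz, e1, e2⟩⟩
        · subst cu; subst cv
          exact ⟨c2, c1, fun z hz e1 e2 => c3 ⟨z, hz, e2, e1⟩⟩
        · exact absurd (cu.trans cv.symm) huv
      · rw [if_pos ⟨hc, cu⟩, if_neg (fun t => cv t.2)] at he
        exact absurd he.symm g2
      · rw [if_neg (fun t => cu t.2), if_pos ⟨hc, cv⟩] at he
        exact absurd he g1
      · rw [if_neg (fun t => cu t.2), if_neg (fun t => cv t.2)] at he
        exact absurd he gi
    · rw [hf ξ] at he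
      simp only [val] at he
      rw [if_neg (fun t => hc t.1), if_neg (fun t => hc t.1)] at he
      exact absurd he gi
  let F : I → I → C := fun a b => f (max a b) (min a b)
  have Fsymm : ∀ a b, F a b = F b a := fun a b => by simp only [F, max_comm, min_comm]
  -- the maximal vertex is `a₂`
  have main : ∀ a₁ a₂ b₁ b₂ : I, a₁ ≠ a₂ → b₁ ≠ b₂ → a₁ ≤ a₂ → b₁ ≤ a₂ → b₂ ≤ a₂ →
      ∀ c, F a₁ b₁ = c → F a₁ b₂ = c → F a₂ b₁ = c → F a₂ b₂ = c → False := by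
    intro a₁ a₂ b₁ b₂ ha hb l1 l2 l3 c e1 e2 e3 e4
    simp only [F, max_eq_left l2, min_eq_right l2] at e3
    simp only [F, max_eq_left l3, min_eq_right l3] at e4
    obtain ⟨_, _, k⟩ := key a₂ b₁ b₂ l2 l3 hb (e3.trans e4.symm)
    rw [e3] at k
    exact k a₁ (lt_of_le_of_ne l1 ha) ((Fsymm _ _).trans e1) ((Fsymm _ _).trans e2)
  refine ⟨F, Fsymm, ?_, ?_⟩
  · rintro ⟨a₁, a₂, b₁, b₂, ha, hb, e1, e2, e3⟩
    have s := Fsymm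
    have m := main
    generalize hc : F a₁ b₁ = c at e1 e2 e3
    have p11 : F a₁ b₁ = c := hc
    have p12 : F a₁ b₂ = c := e1.symm
    have p21 : F a₂ b₁ = c := e2.symm
    have p22 : F a₂ b₂ = c := e3.symm
    have q11 := (s b₁ a₁).trans p11
    have q12 := (s b₂ a₁).trans p12
    have q21 := (s b₁ a₂).trans p21
    have q22 := (s b₂ a₂).trans p22
    have m1 := m a₁ a₂ b₁ b₂ ha hb
    have m2 := m a₂ a₁ b₁ b₂ ha.symm hb
    have m3 := m b₁ b₂ a₁ a₂ hb ha
    have m4 := m b₂ b₁ a₁ a₂ hb.symm ha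
    rcases le_total a₁ a₂ with la | la <;> rcases le_total b₁ b₂ with lb | lb
    · rcases le_total a₂ b₂ with l | l
      · exact m3 lb (la.trans l) l c q11 q21 q12 q22
      · exact m1 la (lb.trans l) l c p11 p12 p21 p22
    · rcases le_total a₂ b₁ with l | l
      · exact m4 lb (la.trans l) l c q12 q22 q11 q21
      · exact m1 la l (lb.trans l) c p11 p12 p21 p22
    · rcases le_total a₁ b₂ with l | l
      · exact m3 lb l (la.trans l) c q11 q21 q12 q22
      · exact m2 la (lb.trans l) l c p21 p22 p11 p12
    · rcases le_total a₁ b₁ with l | l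
      · exact m4 lb l (la.trans l) c q12 q22 q11 q21
      · exact m2 la l (lb.trans l) c p21 p22 p11 p12
  · intro a a' _ c
    obtain ⟨ξ, l1, l2, hξ⟩ := hh a a' c
    by_cases hg : Good ξ f
    · obtain ⟨z, _, e1, e2⟩ := hg
      rw [hξ] at e1 e2
      exact ⟨z, e1, e2⟩
    · refine ⟨ξ, ?_, ?_⟩
      · simp only [F, max_eq_right l1.le, min_eq_left l1.le]
        rw [hf ξ]
        simp only [val]
        rw [if_pos ⟨⟨by rw [hξ]; exact l1, by rw [hξ]; exact l2, hg⟩, by simp [hξ]⟩, hξ]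
      · simp only [F, max_eq_right l2.le, min_eq_left l2.le]
        rw [hf ξ]
        simp only [val]
        rw [if_pos ⟨⟨by rw [hξ]; exact l1, by rw [hξ]; exact l2, hg⟩, by simp [hξ]⟩, hξ]

theorem stmt6 (κ : Cardinal.{u}) (hκ : Cardinal.aleph0 ≤ κ) :
    ∃ (A B C : Type u) (F : A → B → C),
      Cardinal.mk A = Order.succ κ ∧ Cardinal.mk B = Order.succ κ ∧
      Cardinal.mk C = κ ∧
      NoMonoK22 F ∧
      (∀ a a' : A, a ≠ a' → ∀ c : C, ∃ b : B, F a b = c ∧ F a' b = c) ∧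
      (∀ b b' : B, b ≠ b' → ∀ c : C, ∃ a : A, F a b = c ∧ F a b' = c) := by
  classical
  let I : Type u := (Order.succ κ).ord.ToType
  let C : Type u := κ.out
  have hI : Cardinal.mk I = Order.succ κ := Cardinal.mk_ord_toType _
  have hC : Cardinal.mk C = κ := Cardinal.mk_out κ
  have hs : Cardinal.aleph0 ≤ Order.succ κ := hκ.trans (Order.le_succ κ)
  have hIio : ∀ ξ : I, Cardinal.mk (Set.Iio ξ) ≤ κ := fun ξ =>
    Order.lt_succ_iff.1 (Cardinal.mk_Iio_toType_ord_lt ξ)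
  have hIic : ∀ ξ : I, Cardinal.mk (Set.Iic ξ) ≤ κ := by
    intro ξ
    rw [← Set.Iio_insert]
    exact (Cardinal.mk_insert_le).trans
      (Cardinal.add_le_of_le hκ (hIio ξ) (Cardinal.one_le_aleph0.trans hκ))
  have : Nonempty C := Cardinal.mk_ne_zero_iff.1
    (by rw [hC]; exact (Cardinal.aleph0_pos.trans_le hκ).ne')
  have inj : ∀ (ξ : I) (c : C), ∃ g : I → C, Set.InjOn g (Set.Iic ξ) ∧ ∀ u ≤ ξ, g u ≠ c := by
    intro ξ c
    have : Infinite C := Cardinal.infinite_iff.2 (by rw [hC]; exact hκ)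
    have hc : Cardinal.mk (({c} : Set C)ᶜ : Set C) = κ := by
      rw [Cardinal.mk_compl_of_infinite, hC]
      rw [Cardinal.mk_singleton, hC]
      exact Cardinal.one_lt_aleph0.trans_le hκ
    have hle := (hIic ξ).trans hc.ge
    obtain ⟨e⟩ := hle
    refine ⟨fun u => if hu : u ≤ ξ then (e ⟨u, hu⟩ : C) else c, ?_, ?_⟩
    · intro u hu v hv huv
      have hu' : u ≤ ξ := hu
      have hv' : v ≤ ξ := hv
      simp only [dif_pos hu', dif_pos hv'] at huv
      exact congrArg Subtype.val (e.injective (Subtype.ext huv))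
    · intro u hu
      simp only [dif_pos hu]
      exact (e ⟨u, hu⟩).2
  have hcard : Cardinal.mk I = Cardinal.mk (I × (I × I × C)) := by
    simp only [Cardinal.mk_prod, Cardinal.lift_id, hI, hC]
    rw [Cardinal.mul_eq_left hs (Order.le_succ κ) (by
      exact (Cardinal.aleph0_pos.trans_le hκ).ne'), Cardinal.mul_eq_self hs,
      Cardinal.mul_eq_self hs]
  obtain ⟨e⟩ := Cardinal.eq.1 hcard
  have hh : ∀ (x y : I) (c : C), ∃ ξ, x < ξ ∧ y < ξ ∧ (e ξ).2 = (x, y, c) := by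
    intro x y c
    by_contra hn
    push Not at hn
    have hb : ∀ i : I, e.symm (i, (x, y, c)) ∈ Set.Iic (max x y) := by
      intro i
      by_contra hi
      rw [Set.mem_Iic, not_le, max_lt_iff] at hi
      exact hn _ hi.1 hi.2 (by simp)
    have hle : Cardinal.mk I ≤ Cardinal.mk (Set.Iic (max x y)) := by
      refine Cardinal.mk_le_of_injective (f := fun i => ⟨_, hb i⟩) ?_
      intro i j hij
      simpa using hij
    rw [hI] at hle
    exact absurd (hle.trans (hIic _)) (not_le.2 (Order.lt_succ κ))
  obtain ⟨F, hsymm, h1, h2⟩ := stmt6_core (fun ξ => (e ξ).2) inj hh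
  refine ⟨I, I, C, F, hI, hI, hC, h1, h2, ?_⟩
  intro b b' hbb c
  obtain ⟨a, e1, e2⟩ := h2 b b' hbb c
  exact ⟨a, (hsymm _ _).trans e1, (hsymm _ _).trans e2⟩
end

section
/- Let κ be an infinite cardinal, let O be the ordinals below κ⁺, let C be a type, and let F : O → O → C satisfy (*) (no monochromatic K_{2,2}). Suppose A₀ ⊆ O is closed and unbounded in κ⁺, every element of A₀ is ≥ κ, and for every α ∈ A₀ and every c ∈ C there exists β < α with F α β = c. Then F is B-inextensible: for every g : O → C there exist α₁ ≠ α₂ in O and β ∈ O with F α₁ β = F α₂ β = g α₁ = g α₂. -/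
universe u v

theorem strict_bound (κ : Cardinal.{u}) (hκ : Cardinal.aleph0 ≤ κ)
    (S : Set {o : Ordinal.{u} // o < (Order.succ κ).ord})
    (hS : Cardinal.mk S ≤ Cardinal.lift.{u+1} κ) :
    sSup (Subtype.val '' S) < (Order.succ κ).ord := by
  apply Ordinal.sSup_lt_of_lt_cof
  · rw [← Ordinal.lift_cof, (Cardinal.isRegular_succ hκ).cof_ord]
    refine (Cardinal.mk_image_le.trans hS).trans_lt ?_
    rw [Cardinal.lift_lt]
    exact Order.lt_succ κ
  · rintro _ ⟨x, _, rfl⟩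
    exact x.2

theorem mk_Iio_sub (κ : Cardinal.{u})
    (a : {o : Ordinal.{u} // o < (Order.succ κ).ord}) :
    Cardinal.mk (Set.Iio a) ≤ Cardinal.lift.{u+1} κ := by
  have h1 : Cardinal.mk (Set.Iio a) ≤ Cardinal.mk (Set.Iio a.1) := by
    refine Cardinal.mk_le_of_injective
      (f := fun x : Set.Iio a => (⟨x.1.1, x.2⟩ : Set.Iio a.1)) ?_
    intro x y h
    have h' : x.1.1 = y.1.1 := congrArg (fun z : Set.Iio a.1 => z.1) h
    exact Subtype.ext (Subtype.ext h')
  refine h1.trans ?_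
  rw [Cardinal.mk_Iio_ordinal, Cardinal.lift_le]
  exact Order.lt_succ_iff.1 (Cardinal.lt_ord.1 a.2)

theorem stmt7 (κ : Cardinal.{u}) (hκ : Cardinal.aleph0 ≤ κ) {C : Type v}
    (F : {o : Ordinal.{u} // o < (Order.succ κ).ord} →
         {o : Ordinal.{u} // o < (Order.succ κ).ord} → C)
    (hF : NoMonoK22 F)
    (A₀ : Set {o : Ordinal.{u} // o < (Order.succ κ).ord})
    -- `A₀` is unbounded below `κ⁺`
    (hunbdd : ∀ o : {o : Ordinal.{u} // o < (Order.succ κ).ord}, ∃ a ∈ A₀, o ≤ a)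
    -- `A₀` is closed: it contains the supremum of each of its nonempty
    -- (bounded below `κ⁺`) subsets with limit supremum
    (hclosed : ∀ S : Set {o : Ordinal.{u} // o < (Order.succ κ).ord},
      S ⊆ A₀ → S.Nonempty →
      ∀ hb : sSup (Subtype.val '' S) < (Order.succ κ).ord,
        Order.IsSuccLimit (sSup (Subtype.val '' S)) →
        (⟨sSup (Subtype.val '' S), hb⟩ :
          {o : Ordinal.{u} // o < (Order.succ κ).ord}) ∈ A₀)
    -- every element of `A₀` is `≥ κ`
    (hge : ∀ a ∈ A₀, κ.ord ≤ a.1)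
    -- for every `α ∈ A₀` and every color `c` there is `β < α` with `F α β = c`
    (honto : ∀ a ∈ A₀, ∀ c : C, ∃ β, β < a ∧ F a β = c) :
    BInextensible F := by
  intro g
  by_contra hcon
  have hκ1 : Order.IsSuccLimit (Order.succ κ).ord :=
    Cardinal.isSuccLimit_ord (hκ.trans (Order.le_succ κ))
  have bdd : ∀ S : Set {o : Ordinal.{u} // o < (Order.succ κ).ord},
      BddAbove (Subtype.val '' S) := fun S =>
    ⟨(Order.succ κ).ord, by rintro _ ⟨x, _, rfl⟩; exact x.2.le⟩
  choose k hk1 hk2 using honto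
  obtain ⟨a0, ha0, -⟩ := hunbdd ⟨0, hκ1.bot_lt⟩
  -- preimages of initial segments are small
  have step : ∀ a : {o : Ordinal.{u} // o < (Order.succ κ).ord}, ∃ b ∈ A₀, a < b ∧
      ∀ x (hx : x ∈ A₀), k x hx (g x) < a → x < b := by
    intro a
    let S : Set {o : Ordinal.{u} // o < (Order.succ κ).ord} :=
      {x | ∃ hx : x ∈ A₀, k x hx (g x) < a}
    have hS : Cardinal.mk S ≤ Cardinal.lift.{u+1} κ := by
      have : Cardinal.mk S ≤ Cardinal.mk (Set.Iio a × Set.Iio a0) := by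
        refine Cardinal.mk_le_of_injective (f := fun x : S =>
          ((⟨k x.1 x.2.1 (g x.1), x.2.2⟩ : Set.Iio a),
            (⟨k a0 ha0 (g x.1), hk1 _ _ _⟩ : Set.Iio a0))) ?_
        rintro ⟨x, hx, hxa⟩ ⟨y, hy, hya⟩ h
        have h1 : k x hx (g x) = k y hy (g y) :=
          congrArg (fun z : Set.Iio a × Set.Iio a0 => z.1.1) h
        have h2 : k a0 ha0 (g x) = k a0 ha0 (g y) :=
          congrArg (fun z : Set.Iio a × Set.Iio a0 => z.2.1) h
        have hg : g x = g y := by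
          rw [← hk2 a0 ha0 (g x), ← hk2 a0 ha0 (g y), h2]
        by_contra hne
        refine hcon ⟨x, y, fun e => hne (Subtype.ext e), k x hx (g x), ?_, ?_, hg⟩
        · rw [hk2, h1, hk2, hg]
        · rw [h1, hk2, hg]
      refine this.trans ?_
      rw [Cardinal.mk_prod, Cardinal.lift_id, Cardinal.lift_id]
      refine (mul_le_mul' (mk_Iio_sub κ a) (mk_Iio_sub κ a0)).trans ?_
      rw [Cardinal.mul_eq_self]
      simpa using hκ
    have hlt := strict_bound κ hκ S hS
    obtain ⟨b, hb, hle⟩ := hunbdd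
      ⟨Order.succ (max (sSup (Subtype.val '' S)) a.1), hκ1.succ_lt (max_lt hlt a.2)⟩
    have hle' : max (sSup (Subtype.val '' S)) a.1 < b.1 := Order.succ_le_iff.1 hle
    have hab : a.1 < b.1 := (le_max_right _ _).trans_lt hle'
    refine ⟨b, hb, hab, fun x hx hxa => ?_⟩
    change x.1 < b.1
    refine lt_of_le_of_lt ?_ ((le_max_left _ _).trans_lt hle')
    exact le_csSup (bdd S) ⟨x, ⟨hx, hxa⟩, rfl⟩
  choose n hn1 hn2 hn3 using step
  let s : ℕ → {o : Ordinal.{u} // o < (Order.succ κ).ord} := fun i => n^[i] a0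
  have hs : ∀ i, s (i+1) = n (s i) := fun i => Function.iterate_succ_apply' n i a0
  have hsA : ∀ i, s i ∈ A₀ := by
    intro i
    cases i with
    | zero => exact ha0
    | succ i => rw [hs]; exact hn1 _
  have hslt : ∀ i, s i < s (i+1) := fun i => by rw [hs]; exact hn2 _
  have hb : sSup (Subtype.val '' Set.range s) < (Order.succ κ).ord := by
    refine strict_bound κ hκ _ ?_
    refine (Cardinal.le_aleph0_iff_set_countable.2 (Set.countable_range s)).trans ?_
    simpa using hκ
  have hle : ∀ i, (s i).1 ≤ sSup (Subtype.val '' Set.range s) := fun i =>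
    le_csSup (bdd _) ⟨s i, ⟨i, rfl⟩, rfl⟩
  have hex : ∀ o, o < sSup (Subtype.val '' Set.range s) → ∃ i, o < (s i).1 := by
    intro o ho
    obtain ⟨_, ⟨_, ⟨i, rfl⟩, rfl⟩, h⟩ := exists_lt_of_lt_csSup
      ((Set.range_nonempty s).image Subtype.val) ho
    exact ⟨i, h⟩
  have hlim : Order.IsSuccLimit (sSup (Subtype.val '' Set.range s)) := by
    refine ⟨?_, ?_⟩
    · intro hmin
      have h01 : (s 0).1 < (s 1).1 := hslt 0
      exact (h01.trans_le (hle 1)).not_ge (hmin (hle 0))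
    · refine Order.isSuccPrelimit_of_succ_lt ?_
      intro o ho
      obtain ⟨i, hi⟩ := hex o ho
      exact ((Order.succ_le_of_lt hi).trans_lt (hslt i)).trans_le (hle (i+1))
  have hα := hclosed (Set.range s) (by rintro _ ⟨i, rfl⟩; exact hsA i) ⟨_, ⟨0, rfl⟩⟩ hb hlim
  obtain ⟨i, hi⟩ := hex _ (hk1 _ hα (g _))
  have h := hn3 (s i) _ hα hi
  rw [← hs] at h
  exact absurd (hle (i+1)) (not_le_of_gt h)
end

section
/- Let κ be an infinite cardinal and let A, B, C be types with #B ≤ κ and #C ≤ κ. Suppose F : A → B → C satisfies (*) (no monochromatic K_{2,2}). Then the set {a ∈ A | the map b ↦ F a b is not injective} has cardinality at most κ. -/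
universe u

theorem stmt10 (κ : Cardinal.{u}) (hκ : Cardinal.aleph0 ≤ κ)
    {A B C : Type u} (F : A → B → C)
    (hB : Cardinal.mk B ≤ κ) (hC : Cardinal.mk C ≤ κ)
    (hF : NoMonoK22 F) :
    Cardinal.mk {a : A // ¬ Function.Injective (F a)} ≤ κ := by
  have key : ∀ a : {a : A // ¬ Function.Injective (F a)},
      ∃ p : B × B, p.1 ≠ p.2 ∧ F a.1 p.1 = F a.1 p.2 := by
    rintro ⟨a, ha⟩
    simp only [Function.Injective, not_forall] at ha
    obtain ⟨b₁, b₂, h, hne⟩ := ha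
    exact ⟨(b₁, b₂), hne, h⟩
  choose p hne hp using key
  have inj : Function.Injective
      (fun a : {a : A // ¬ Function.Injective (F a)} => (p a, F a.1 (p a).1)) := by
    intro a a' h
    simp only [Prod.mk.injEq] at h
    obtain ⟨h1, h2⟩ := h
    by_contra hna
    refine hF ⟨a.1, a'.1, (p a).1, (p a).2, fun h => hna (Subtype.ext h), hne a, hp a, ?_, ?_⟩
    · rw [h2, h1]
    · rw [h2, hp a', h1]
  refine (Cardinal.mk_le_of_injective inj).trans ?_
  simp only [Cardinal.mk_prod, Cardinal.lift_id]
  calc Cardinal.mk B * Cardinal.mk B * Cardinal.mk C ≤ κ * κ * κ := by gcongr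
    _ = κ := by rw [Cardinal.mul_eq_self hκ, Cardinal.mul_eq_self hκ]
end

section
/- Let κ be an infinite cardinal and let A, B, C be types with #A ≥ κ⁺, #B ≤ κ, #C ≤ κ. Suppose F : A → B → C satisfies (*) (no monochromatic K_{2,2}). Then there exists h : B → C such that the extension F' : (A ⊕ PUnit) → B → C, defined by F' (inl a) b = F a b and F' (inr ⋆) b = h b, still satisfies (*). In particular, the A-side of F can be properly extended while keeping B and C fixed. -/
universe u

theorem stmt11 (κ : Cardinal.{u}) (hκ : Cardinal.aleph0 ≤ κ)
    {A B C : Type u} (F : A → B → C)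
    (hA : Order.succ κ ≤ Cardinal.mk A)
    (hB : Cardinal.mk B ≤ κ) (hC : Cardinal.mk C ≤ κ)
    (hF : NoMonoK22 F) :
    ∃ h : B → C,
      NoMonoK22 (fun (x : A ⊕ PUnit) (b : B) =>
        Sum.elim (fun a => F a b) (fun _ => h b) x) := by
  have key : ∃ h : B → C, Function.Injective h := by
    by_contra hno
    push Not at hno
    have h1 : ∀ a, ∃ p : B × B, F a p.1 = F a p.2 ∧ p.1 ≠ p.2 := by
      intro a
      have := hno (F a)
      simp only [Function.Injective, not_forall] at this
      obtain ⟨x, y, hxy, hne⟩ := this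
      exact ⟨(x, y), hxy, hne⟩
    choose p hp hne using h1
    have hinj : Function.Injective (fun a => (p a, F a (p a).1)) := by
      intro a a' h
      by_contra haa
      simp only [Prod.mk.injEq] at h
      obtain ⟨hpp, hc⟩ := h
      refine hF ⟨a, a', (p a).1, (p a).2, haa, hne a, hp a, ?_, ?_⟩
      · rw [hc, hpp]
      · rw [hc, hp a', hpp]
    have hle := Cardinal.mk_le_of_injective hinj
    have h2 : Cardinal.mk ((B × B) × C) ≤ κ := by
      simp only [Cardinal.mk_prod, Cardinal.lift_id]
      calc _ ≤ κ * κ * κ := by gcongr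
        _ = κ := by rw [Cardinal.mul_eq_self hκ, Cardinal.mul_eq_self hκ]
    exact absurd (hA.trans (hle.trans h2)) (not_le.mpr (Order.lt_succ κ))
  obtain ⟨h, hh⟩ := key
  refine ⟨h, ?_⟩
  rintro ⟨a₁, a₂, b₁, b₂, ha, hb, e1, e2, e3⟩
  rcases a₁ with a₁ | a₁
  · rcases a₂ with a₂ | a₂
    · exact hF ⟨a₁, a₂, b₁, b₂, fun h => ha (by rw [h]), hb, e1, e2, e3⟩
    · exact hb (hh (e2.symm.trans e3))
  · exact hb (hh e1)
end

section
/- Let κ be an infinite cardinal and let A, B, C be types with #A ≥ κ⁺⁺ (the double cardinal successor of κ) and #C ≤ κ. Suppose F : A → B → C satisfies (*) (no monochromatic K_{2,2}). Then #B ≤ κ, and there exists a ∈ A such that the map b ↦ F a b is injective. -/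
universe u

theorem k22_aux (κ : Cardinal.{u}) (hκ : Cardinal.aleph0 ≤ κ)
    {A B C : Type u} (F : A → B → C)
    (hA : Order.succ (Order.succ κ) ≤ Cardinal.mk A)
    (hC : Cardinal.mk C ≤ κ) (hB : Cardinal.mk B ≤ Order.succ κ)
    (hF : NoMonoK22 F) : ∃ a : A, Function.Injective (F a) := by
  by_contra hcon
  have h : ∀ a : A, ∃ b₁ b₂ : B, F a b₁ = F a b₂ ∧ b₁ ≠ b₂ := by
    intro a
    by_contra h
    refine hcon ⟨a, fun x y hxy => ?_⟩
    by_contra hne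
    exact h ⟨x, y, hxy, hne⟩
  choose f g hfg hne using h
  have hinj : Function.Injective (fun a => (f a, g a, F a (f a))) := by
    intro a a' haa
    simp only [Prod.mk.injEq] at haa
    obtain ⟨h1, h2, h3⟩ := haa
    by_contra hn
    refine hF ⟨a, a', f a, g a, hn, hne a, hfg a, ?_, ?_⟩
    · rw [h3, h1]
    · rw [h3, h2, hfg a']
  have hs : κ ≤ Order.succ κ := Order.le_succ κ
  have hinf : Cardinal.aleph0 ≤ Order.succ κ := hκ.trans hs
  have hle : Cardinal.mk A ≤ Order.succ κ := by
    calc Cardinal.mk A ≤ Cardinal.mk (B × B × C) := Cardinal.mk_le_of_injective hinj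
      _ = Cardinal.mk B * (Cardinal.mk B * Cardinal.mk C) := by simp
      _ ≤ Order.succ κ * (Order.succ κ * Order.succ κ) :=
        mul_le_mul' hB (mul_le_mul' hB (hC.trans hs))
      _ = Order.succ κ := by rw [Cardinal.mul_eq_self hinf, Cardinal.mul_eq_self hinf]
  exact absurd (hA.trans hle) (not_le.mpr (Order.lt_succ _))

theorem stmt12 (κ : Cardinal.{u}) (hκ : Cardinal.aleph0 ≤ κ)
    {A B C : Type u} (F : A → B → C)
    (hA : Order.succ (Order.succ κ) ≤ Cardinal.mk A)
    (hC : Cardinal.mk C ≤ κ)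
    (hF : NoMonoK22 F) :
    Cardinal.mk B ≤ κ ∧ ∃ a : A, Function.Injective (F a) := by
  have hBκ : Cardinal.mk B ≤ κ := by
    by_contra hB
    have hB' : Order.succ κ ≤ Cardinal.mk B := Order.succ_le_of_lt (not_le.mp hB)
    obtain ⟨S, hS⟩ := Cardinal.le_mk_iff_exists_set.mp hB'
    obtain ⟨a, ha⟩ := k22_aux κ hκ (fun a (b : S) => F a b) hA hC hS.le (by
      rintro ⟨a₁, a₂, b₁, b₂, h1, h2, h3⟩
      exact hF ⟨a₁, a₂, b₁, b₂, h1, fun h => h2 (Subtype.ext h), h3⟩)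
    have h := Cardinal.mk_le_of_injective ha
    rw [hS] at h
    exact absurd (h.trans hC) (not_le.mpr (Order.lt_succ _))
  exact ⟨hBκ, k22_aux κ hκ F hA hC (hBκ.trans (Order.le_succ κ)) hF⟩
end

section
/- For every infinite cardinal κ, there exist types A, B, C with #A = #B = κ⁺ and #C = κ and two functions F₁, F₂ : A → B → C such that each Fᵢ satisfies (*) (no monochromatic K_{2,2}) and is C-maximal (both A-inextensible and B-inextensible), and F₁ and F₂ are non-isomorphic: there are no bijections σ : A ≃ A, τ : B ≃ B, ρ : C ≃ C with ρ (F₁ a b) = F₂ (σ a) (τ b) for all a ∈ A and b ∈ B. -/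
universe u

open Classical in
noncomputable def rstep13 {I C : Type u} [LinearOrder I] (S : Set I) (e : I → (I × I) × C)
    (j : I → C → I → C) (α : I) (r : ∀ β, β < α → (I → C)) : I → C :=
  let G : I → I → C → Prop := fun a b c => ∃ h : max a b < α, r (max a b) h (min a b) = c
  if (e α).1.1 < α ∧ (e α).1.2 < α ∧ (e α).1.1 ≠ (e α).1.2 ∧ (e α).1.1 ∈ S ∧ (e α).1.2 ∈ S ∧
      ∀ β < α, ¬ (G β (e α).1.1 (e α).2 ∧ G β (e α).1.2 (e α).2) then
    fun z => if z = (e α).1.1 ∨ z = (e α).1.2 then (e α).2 else j α (e α).2 z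
  else j α (e α).2

theorem exists_F13 {I C : Type u} [LinearOrder I] [WellFoundedLT I] (S : Set I)
    (e : I → (I × I) × C) (he : ∀ x y c, ∃ α, x < α ∧ y < α ∧ e α = ((x, y), c))
    (j : I → C → I → C) (hj : ∀ α c x y, x ≤ α → y ≤ α → j α c x = j α c y → x = y)
    (hjc : ∀ α c x, x ≤ α → j α c x ≠ c) :
    ∃ F : I → I → C, (∀ a b, F a b = F b a) ∧
      (∀ α x y, x ≤ α → y ≤ α → x ≠ y → F α x = F α y →
        x < α ∧ y < α ∧ x ∈ S ∧ y ∈ S ∧ ∀ β < α, ¬ (F β x = F α x ∧ F β y = F α x)) ∧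
      (∀ x ∈ S, ∀ y ∈ S, x ≠ y → ∀ c, ∃ a, F a x = c ∧ F a y = c) := by
  classical
  have wf : WellFounded (fun a b : I => a < b) := wellFounded_lt
  let f : I → I → C := wf.fix (rstep13 S e j)
  have hf : ∀ α, f α = rstep13 S e j α (fun β _ => f β) := fun α => wf.fix_eq _ α
  let F : I → I → C := fun a b => f (max a b) (min a b)
  have hF : ∀ α z, z ≤ α → F α z = f α z := by
    intro α z h
    simp [F, h]
  have hf2 : ∀ α, f α = if (e α).1.1 < α ∧ (e α).1.2 < α ∧ (e α).1.1 ≠ (e α).1.2 ∧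
      (e α).1.1 ∈ S ∧ (e α).1.2 ∈ S ∧
      ∀ β < α, ¬ (F β (e α).1.1 = (e α).2 ∧ F β (e α).1.2 = (e α).2) then
      fun z => if z = (e α).1.1 ∨ z = (e α).1.2 then (e α).2 else j α (e α).2 z
      else j α (e α).2 := by
    intro α
    rw [hf α]
    unfold rstep13
    refine if_congr ?_ rfl rfl
    refine and_congr_right fun h1 => and_congr_right fun h2 => and_congr_right fun _ =>
      and_congr_right fun _ => and_congr_right fun _ => ?_
    refine forall_congr' fun β => forall_congr' fun hβ => ?_
    have k1 : max β (e α).1.1 < α := max_lt hβ h1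
    have k2 : max β (e α).1.2 < α := max_lt hβ h2
    simp only [F, k1, k2, exists_true_left]
  refine ⟨F, fun a b => by simp only [F, max_comm, min_comm], ?_, ?_⟩
  · intro α x y hx hy hxy h
    rw [hF α x hx] at *
    rw [hF α y hy] at h
    have h2 := hf2 α
    split_ifs at h2 with hc
    · obtain ⟨c1, c2, c3, c4, c5, c6⟩ := hc
      rw [h2] at h ⊢
      by_cases hx' : x = (e α).1.1 ∨ x = (e α).1.2
      · by_cases hy' : y = (e α).1.1 ∨ y = (e α).1.2
        · simp only [hx', if_true]
          rcases hx' with rfl | rfl <;> rcases hy' with rfl | rfl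
          · exact absurd rfl hxy
          · exact ⟨c1, c2, c4, c5, c6⟩
          · exact ⟨c2, c1, c5, c4, fun β hβ hh => c6 β hβ hh.symm⟩
          · exact absurd rfl hxy
        · simp only [hx', hy', if_true, if_false] at h
          exact absurd h.symm (hjc _ _ _ hy)
      · by_cases hy' : y = (e α).1.1 ∨ y = (e α).1.2
        · simp only [hx', hy', if_true, if_false] at h
          exact absurd h (hjc _ _ _ hx)
        · simp only [hx', hy', if_false] at h
          exact absurd (hj _ _ _ _ hx hy h) hxy
    · rw [h2] at h
      exact absurd (hj _ _ _ _ hx hy h) hxy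
  · intro x hx y hy hxy c
    obtain ⟨α, h1, h2, h3⟩ := he x y c
    by_cases hc : ∀ β < α, ¬ (F β x = c ∧ F β y = c)
    · refine ⟨α, ?_⟩
      rw [hF α x h1.le, hF α y h2.le, hf2 α, h3]
      simp only
      rw [if_pos ⟨h1, h2, hxy, hx, hy, hc⟩]
      simp
    · push Not at hc
      obtain ⟨β, _, h⟩ := hc
      exact ⟨β, h⟩

theorem good13 {I C : Type u} [LinearOrder I] (S : Set I)
    (hS : ∀ g : I → C, ∃ x ∈ S, ∃ y ∈ S, x ≠ y ∧ g x = g y)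
    (F : I → I → C) (hsymm : ∀ a b, F a b = F b a)
    (h1 : ∀ α x y, x ≤ α → y ≤ α → x ≠ y → F α x = F α y →
        x < α ∧ y < α ∧ x ∈ S ∧ y ∈ S ∧ ∀ β < α, ¬ (F β x = F α x ∧ F β y = F α x))
    (h2 : ∀ x ∈ S, ∀ y ∈ S, x ≠ y → ∀ c, ∃ a, F a x = c ∧ F a y = c) :
    NoMonoK22 F ∧ AInextensible F ∧ BInextensible F := by
  refine ⟨?_, ?_, ?_⟩
  · -- key: the largest vertex is a row
    have key : ∀ a a' b b', a' ≤ a → b ≤ a → b' ≤ a → a ≠ a' → b ≠ b' → F a b = F a b' →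
        F a b = F a' b → F a b = F a' b' → False := by
      intro a a' b b' k1 k2 k3 n1 n2 e1 e2 e3
      obtain ⟨_, _, _, _, h⟩ := h1 a b b' k2 k3 n2 e1
      exact h a' (lt_of_le_of_ne k1 n1.symm) ⟨e2.symm, e3.symm⟩
    rintro ⟨a, a', b, b', n1, n2, e1, e2, e3⟩
    have s1 := hsymm a b
    have s2 := hsymm a b'
    have s3 := hsymm a' b
    have s4 := hsymm a' b'
    by_cases ha : a' ≤ a ∧ b ≤ a ∧ b' ≤ a
    · exact key a a' b b' ha.1 ha.2.1 ha.2.2 n1 n2 e1 e2 e3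
    by_cases ha' : a ≤ a' ∧ b ≤ a' ∧ b' ≤ a'
    · exact key a' a b b' ha'.1 ha'.2.1 ha'.2.2 n1.symm n2 (by grind) (by grind) (by grind)
    by_cases hb : b' ≤ b ∧ a ≤ b ∧ a' ≤ b
    · exact key b b' a a' hb.1 hb.2.1 hb.2.2 n2 n1 (by grind) (by grind) (by grind)
    by_cases hb' : b ≤ b' ∧ a ≤ b' ∧ a' ≤ b'
    · exact key b' b a a' hb'.1 hb'.2.1 hb'.2.2 n2.symm n1 (by grind) (by grind) (by grind)
    grind
  · intro g
    obtain ⟨x, hx, y, hy, hxy, hg⟩ := hS g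
    obtain ⟨a, e1, e2⟩ := h2 x hx y hy hxy (g x)
    exact ⟨x, y, hxy, a, e1.trans e2.symm, e2, hg⟩
  · intro g
    obtain ⟨x, hx, y, hy, hxy, hg⟩ := hS g
    obtain ⟨a, e1, e2⟩ := h2 x hx y hy hxy (g x)
    rw [hsymm] at e1 e2
    exact ⟨x, y, hxy, a, e1.trans e2.symm, e2, hg⟩

theorem stmt13 (κ : Cardinal.{u}) (hκ : Cardinal.aleph0 ≤ κ) :
    ∃ (A B C : Type u) (F₁ F₂ : A → B → C),
      Cardinal.mk A = Order.succ κ ∧ Cardinal.mk B = Order.succ κ ∧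
      Cardinal.mk C = κ ∧
      (NoMonoK22 F₁ ∧ AInextensible F₁ ∧ BInextensible F₁) ∧
      (NoMonoK22 F₂ ∧ AInextensible F₂ ∧ BInextensible F₂) ∧
      ¬ ∃ (σ : A ≃ A) (τ : B ≃ B) (ρ : C ≃ C),
          ∀ (a : A) (b : B), ρ (F₁ a b) = F₂ (σ a) (τ b) := by
  classical
  let I : Type u := (Order.succ κ).ord.ToType
  let C : Type u := κ.out
  have hI : Cardinal.mk I = Order.succ κ := Cardinal.mk_ord_toType _
  have hC : Cardinal.mk C = κ := Cardinal.mk_out κ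
  have hκI : Cardinal.aleph0 ≤ Cardinal.mk I := by
    rw [hI]; exact hκ.trans (Order.le_succ κ)
  haveI : Infinite I := Cardinal.infinite_iff.2 hκI
  haveI : Infinite C := Cardinal.infinite_iff.2 (by rw [hC]; exact hκ)
  have hIic : ∀ i : I, Cardinal.mk (Set.Iic i) ≤ κ := by
    intro i
    have h := Cardinal.mk_Iic_lt (α := I) i (by
      rw [hI]; simp [I]) hκI
    rw [hI] at h
    exact Order.lt_succ_iff.1 h
  -- injections
  have hjex : ∀ (α : I) (c : C), ∃ j : I → C, (∀ x y, x ≤ α → y ≤ α → j x = j y → x = y) ∧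
      ∀ x, x ≤ α → j x ≠ c := by
    intro α c
    have h1 : Cardinal.mk (Set.Iic α) ≤ Cardinal.mk (({c} : Set C)ᶜ : Set C) := by
      rw [Cardinal.mk_compl_of_infinite _ (by
        rw [hC, Cardinal.mk_singleton]; exact Cardinal.one_lt_aleph0.trans_le hκ), hC]
      exact hIic α
    obtain ⟨φ⟩ := h1
    refine ⟨fun x => if h : x ≤ α then (φ ⟨x, h⟩ : C) else c, ?_, ?_⟩
    · intro x y hx hy h
      simp only [hx, hy, dif_pos] at h
      have := φ.injective (Subtype.ext h)
      exact congrArg Subtype.val this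
    · intro x hx
      simp only [hx, dif_pos]
      exact (φ ⟨x, hx⟩).2
  choose j hj hjc using hjex
  -- bookkeeping
  have heq : Cardinal.mk I = Cardinal.mk (((I × I) × C) × I) := by
    have hCI : Cardinal.mk C ≤ Cardinal.mk I := by rw [hC, hI]; exact Order.le_succ κ
    have hC0 : Cardinal.mk C ≠ 0 := Cardinal.mk_ne_zero C
    simp only [Cardinal.mk_prod, Cardinal.lift_id]
    rw [Cardinal.mul_eq_self hκI, Cardinal.mul_eq_left hκI hCI hC0, Cardinal.mul_eq_self hκI]
  obtain ⟨φ⟩ := Cardinal.eq.1 heq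
  let e : I → (I × I) × C := fun α => (φ α).1
  have he : ∀ x y c, ∃ α, x < α ∧ y < α ∧ e α = ((x, y), c) := by
    intro x y c
    by_contra hcon
    push Not at hcon
    have hm : ∀ i : I, φ.symm (((x, y), c), i) ∈ Set.Iic (max x y) := by
      intro i
      by_contra hlt
      have hlt' : max x y < φ.symm (((x, y), c), i) := not_le.1 hlt
      exact hcon _ ((le_max_left _ _).trans_lt hlt') ((le_max_right _ _).trans_lt hlt')
        (by simp [e])
    have hle : Cardinal.mk I ≤ Cardinal.mk (Set.Iic (max x y)) :=
      Cardinal.mk_le_of_injective (f := fun i => (⟨_, hm i⟩ : Set.Iic (max x y))) (by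
        intro i i' h
        have := φ.symm.injective (congrArg Subtype.val h)
        exact (Prod.ext_iff.1 this).2)
    have := hle.trans (hIic _)
    rw [hI] at this
    exact absurd (Order.lt_succ κ) (not_lt.2 this)
  have hS : ∀ S : Set I, Cardinal.mk S = Order.succ κ → ∀ g : I → C,
      ∃ x ∈ S, ∃ y ∈ S, x ≠ y ∧ g x = g y := by
    intro S hS g
    by_contra hcon
    push Not at hcon
    have hle : Cardinal.mk S ≤ Cardinal.mk C :=
      Cardinal.mk_le_of_injective (f := fun s : S => g s) (by
        intro s t h
        by_contra hne
        exact hcon s s.2 t t.2 (fun h => hne (Subtype.ext h)) h)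
    rw [hS, hC] at hle
    exact absurd (Order.lt_succ κ) (not_lt.2 hle)
  -- the two least elements
  have wf : WellFounded (fun a b : I => a < b) := wellFounded_lt
  obtain ⟨p, -, hp⟩ := wf.has_min (Set.univ : Set I) Set.univ_nonempty
  obtain ⟨q, hq, hq'⟩ := wf.has_min ({p}ᶜ : Set I) (by
    obtain ⟨q, hq⟩ := exists_ne p
    exact ⟨q, hq⟩)
  have hpq : p < q := lt_of_le_of_ne (not_lt.1 (hp q trivial)) (Ne.symm hq)
  have hSp : Cardinal.mk (({p} : Set I)ᶜ : Set I) = Order.succ κ := by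
    rw [Cardinal.mk_compl_of_infinite _ (by
      rw [Cardinal.mk_singleton]; exact Cardinal.one_lt_aleph0.trans_le hκI), hI]
  obtain ⟨F₁, s1, u1, v1⟩ := exists_F13 (Set.univ : Set I) e he j hj hjc
  obtain ⟨F₂, s2, u2, v2⟩ := exists_F13 ({p}ᶜ : Set I) e he j hj hjc
  refine ⟨I, I, C, F₁, F₂, hI, hI, hC,
    good13 _ (hS _ (by rw [Cardinal.mk_univ, hI])) F₁ s1 u1 v1,
    good13 _ (hS _ hSp) F₂ s2 u2 v2, ?_⟩
  rintro ⟨σ, τ, ρ, h⟩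
  obtain ⟨d, hd⟩ := exists_ne (F₂ p p)
  obtain ⟨a, ha1, ha2⟩ := v1 (τ.symm p) trivial (τ.symm q) trivial
    (fun hh => hpq.ne (τ.symm.injective hh)) (ρ.symm d)
  have k1 := h a (τ.symm p)
  have k2 := h a (τ.symm q)
  rw [ha1] at k1
  rw [ha2] at k2
  simp only [Equiv.apply_symm_apply] at k1 k2
  by_cases hb : q ≤ σ a
  · exact (u2 (σ a) p q (hpq.le.trans hb) hb hpq.ne (k1.symm.trans k2)).2.2.1 rfl
  · have hap : σ a = p := by
      by_contra hne
      exact hq' (σ a) hne (not_le.1 hb)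
    rw [hap] at k1
    exact hd k1
end

section
/- For every infinite cardinal κ, there exist: types A, B, C with #A = #B = κ⁺ and #C = κ; a subset C₀ ⊆ C with #C₀ = κ and #(C \ C₀) = κ; a bijection e from the ordinals below κ onto C₀; functions l₁, l₂ from the ordinals below κ to A such that the values l₁ α, l₂ α (over all α < κ) are pairwise distinct; and a function F : A → B → C satisfying: (i) F satisfies (*) (no monochromatic K_{2,2}); (ii) for every ordinal α < κ and every c ∈ C, there exists b ∈ B with F (l₁ α) b = c and F (l₂ α) b = c if and only if c ∉ C₀ or there is an ordinal β with α < β < κ and c = e β; (iii) for all distinct a, a' ∈ A such that {a, a'} ≠ {l₁ α, l₂ α} for every α < κ, and every c ∈ C, there exists b ∈ B with F a b = c and F a' b = c. -/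
universe u

section Aux

variable {T K : Type u} [LinearOrder T]

abbrev AuxC (K : Type u) : Type u := Bool × K × Bool

abbrev AuxB (T K : Type u) [LinearOrder T] : Type u :=
  {x : T × T × AuxC K // x.2.1 ≤ x.1}

def auxNew (i : T → AuxB T K → K) (a : T) (b : AuxB T K) : AuxC K :=
  (true, i a b, !b.1.2.2.2.2)

def auxValid (i : T → AuxB T K → K) (Ex : T → T → AuxC K → Prop) (b : AuxB T K) : Prop :=
  b.1.2.1 < b.1.1 ∧ ¬ Ex b.1.1 b.1.2.1 b.1.2.2 ∧
    ¬ ∃ b₀ : AuxB T K, b₀.1.1 < b.1.2.1 ∧ auxNew i b.1.1 b₀ = b.1.2.2 ∧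
      auxNew i b.1.2.1 b₀ = b.1.2.2

open Classical in
noncomputable def auxF (i : T → AuxB T K → K) (j : T → T → K)
    (Ex : T → T → AuxC K → Prop) (a : T) (b : AuxB T K) : AuxC K :=
  if b.1.1 < a then auxNew i a b
  else if auxValid i Ex b ∧ (a = b.1.1 ∨ a = b.1.2.1) then b.1.2.2
  else (false, j b.1.1 a, !b.1.2.2.2.2)

theorem auxF_key (i : T → AuxB T K → K) (j : T → T → K)
    (Ex : T → T → AuxC K → Prop) (hj : ∀ p, Set.InjOn (j p) (Set.Iic p))
    {p q : T} (h : q < p) (b : AuxB T K) (c : AuxC K)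
    (h1 : auxF i j Ex p b = c) (h2 : auxF i j Ex q b = c) :
    (b.1.1 < q ∧ auxNew i p b = c ∧ auxNew i q b = c) ∨
      (b.1 = (p, q, c) ∧ auxValid i Ex b) := by
  rcases lt_or_ge b.1.1 q with hq | hq
  · left
    rw [auxF, if_pos (hq.trans h)] at h1
    rw [auxF, if_pos hq] at h2
    exact ⟨hq, h1, h2⟩
  · right
    rw [auxF, if_neg hq.not_gt] at h2
    obtain ⟨⟨P, Q, x, y, z⟩, hb⟩ := b
    dsimp only at *
    rcases lt_or_ge P p with hp | hp
    · exfalso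
      rw [auxF, if_pos hp] at h1
      subst h1
      split_ifs at h2 with h3
      · simp [auxNew] at h2
      · simp [auxNew] at h2
    · rw [auxF, if_neg hp.not_gt] at h1
      dsimp only at *
      split_ifs at h1 with h3 <;> split_ifs at h2 with h4
      · obtain ⟨hv, h3⟩ := h3
        obtain ⟨_, h4⟩ := h4
        refine ⟨?_, hv⟩
        have hPp : p = P := by
          rcases h3 with h3 | h3
          · exact h3
          · rcases h4 with h4 | h4
            · subst h4; exact absurd (h.trans_le hp) (lt_irrefl _)
            · subst h3; subst h4; exact absurd h (lt_irrefl _)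
        have hQq : q = Q := by
          rcases h4 with h4 | h4
          · rw [h4, hPp] at h; exact absurd h (lt_irrefl _)
          · exact h4
        rw [hPp, hQq, ← h1]
      · exfalso; rw [← h1] at h2; simp at h2
      · exfalso; rw [← h1] at h2; simp at h2
      · exfalso
        rw [← h1] at h2
        have h5 : j P q = j P p := by simpa using h2
        exact h.ne (hj P hq hp h5)

theorem auxF_uniq (i : T → AuxB T K → K) (j : T → T → K)
    (Ex : T → T → AuxC K → Prop) (hj : ∀ p, Set.InjOn (j p) (Set.Iic p))
    (hi : ∀ a, Set.InjOn (i a) {b | b.1.1 < a})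
    {p q : T} (h : q < p) (b b' : AuxB T K) (c : AuxC K)
    (h1 : auxF i j Ex p b = c) (h2 : auxF i j Ex q b = c)
    (h1' : auxF i j Ex p b' = c) (h2' : auxF i j Ex q b' = c) : b = b' := by
  rcases auxF_key i j Ex hj h b c h1 h2 with ⟨k, k1, k2⟩ | ⟨k, kv⟩ <;>
  rcases auxF_key i j Ex hj h b' c h1' h2' with ⟨k', k1', k2'⟩ | ⟨k', kv'⟩
  · rw [← k1'] at k1
    exact hi p (k.trans h) (k'.trans h) (by simp only [auxNew, Prod.mk.injEq] at k1; exact k1.2.1)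
  · exfalso
    have := kv'.2.2
    rw [k'] at this
    exact this ⟨b, k, k1, k2⟩
  · exfalso
    have := kv.2.2
    rw [k] at this
    exact this ⟨b', k', k1', k2'⟩
  · exact Subtype.ext (k.trans k'.symm)

theorem auxF_ex (i : T → AuxB T K → K) (j : T → T → K)
    (Ex : T → T → AuxC K → Prop) (hj : ∀ p, Set.InjOn (j p) (Set.Iic p))
    (hE : ∀ p q c, Ex p q c → c.1 = false)
    {p q : T} (h : q < p) (c : AuxC K) :
    (∃ b, auxF i j Ex p b = c ∧ auxF i j Ex q b = c) ↔ ¬ Ex p q c := by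
  constructor
  · rintro ⟨b, h1, h2⟩ hx
    rcases auxF_key i j Ex hj h b c h1 h2 with ⟨k, k1, k2⟩ | ⟨k, kv⟩
    · have := hE _ _ _ hx
      rw [← k1] at this
      simp [auxNew] at this
    · have := kv.2.1
      rw [k] at this
      exact this hx
  · intro hx
    by_cases hb : ∃ b₀ : AuxB T K, b₀.1.1 < q ∧ auxNew i p b₀ = c ∧ auxNew i q b₀ = c
    · obtain ⟨b, k, k1, k2⟩ := hb
      refine ⟨b, ?_, ?_⟩
      · rw [auxF, if_pos (k.trans h), k1]
      · rw [auxF, if_pos k, k2]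
    · have hv : auxValid i Ex (⟨(p, q, c), h.le⟩ : AuxB T K) := ⟨h, hx, hb⟩
      refine ⟨⟨(p, q, c), h.le⟩, ?_, ?_⟩
      · rw [auxF, if_neg (lt_irrefl _), if_pos ⟨hv, Or.inl rfl⟩]
      · rw [auxF, if_neg (not_lt.2 h.le), if_pos ⟨hv, Or.inr rfl⟩]

theorem aux_injOn {X Y : Type u} [Nonempty Y] (s : Set X)
    (h : Cardinal.mk s ≤ Cardinal.mk Y) : ∃ f : X → Y, Set.InjOn f s := by
  classical
  obtain ⟨f⟩ := h
  refine ⟨fun x => if hx : x ∈ s then f ⟨x, hx⟩ else Classical.arbitrary Y, ?_⟩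
  intro x hx y hy hxy
  simp only [hx, hy, dif_pos] at hxy
  exact congrArg Subtype.val (f.injective hxy)

end Aux

theorem stmt14 (κ : Cardinal.{u}) (hκ : Cardinal.aleph0 ≤ κ) :
    ∃ (A B C : Type u) (C₀ : Set C)
      (e : {o : Ordinal.{u} // o < κ.ord} ≃ C₀)
      (l₁ l₂ : {o : Ordinal.{u} // o < κ.ord} → A)
      (F : A → B → C),
      Cardinal.mk A = Order.succ κ ∧ Cardinal.mk B = Order.succ κ ∧
      Cardinal.mk C = κ ∧
      Cardinal.mk C₀ = κ ∧ Cardinal.mk ↥(C₀ᶜ) = κ ∧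
      -- the points `l₁ α`, `l₂ α` (over all `α < κ`) are pairwise distinct
      Function.Injective l₁ ∧ Function.Injective l₂ ∧
      (∀ α β, l₁ α ≠ l₂ β) ∧
      -- (i)
      NoMonoK22 F ∧
      -- (ii)
      (∀ (α : {o : Ordinal.{u} // o < κ.ord}) (c : C),
        (∃ b : B, F (l₁ α) b = c ∧ F (l₂ α) b = c) ↔
          (c ∉ C₀ ∨ ∃ β, α < β ∧ c = (e β : C))) ∧
      -- (iii)
      (∀ a a' : A, a ≠ a' →
        (∀ α, ({a, a'} : Set A) ≠ {l₁ α, l₂ α}) →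
        ∀ c : C, ∃ b : B, F a b = c ∧ F a' b = c) := by
  classical
  have hsucc : Cardinal.aleph0 ≤ Order.succ κ := hκ.trans (Order.le_succ κ)
  let T : Type u := (Order.succ κ).ord.ToType
  let K : Type u := κ.ord.ToType
  have hT : Cardinal.mk T = Order.succ κ := by simp [T]
  have hK : Cardinal.mk K = κ := by simp [K]
  have hKB : Cardinal.mk (K × Bool) = κ := by
    rw [Cardinal.mk_prod, hK]
    simp only [Cardinal.lift_id, Cardinal.lift_uzero, Cardinal.mk_bool, Cardinal.lift_ofNat]
    exact Cardinal.mul_eq_left hκ ((Cardinal.natCast_lt_aleph0 (n := 2)).le.trans hκ) two_ne_zero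
  have hC : Cardinal.mk (AuxC K) = κ := by
    rw [AuxC, Cardinal.mk_prod, hKB]
    simp only [Cardinal.lift_id, Cardinal.lift_uzero, Cardinal.mk_bool, Cardinal.lift_ofNat]
    exact Cardinal.mul_eq_right hκ ((Cardinal.natCast_lt_aleph0 (n := 2)).le.trans hκ) two_ne_zero
  have hne : Nonempty K := by
    rw [← Cardinal.mk_ne_zero_iff, hK]
    exact (Cardinal.aleph0_pos.trans_le hκ).ne'
  have hIio : ∀ a : T, Cardinal.mk (Set.Iio a) ≤ κ := fun a =>
    Order.lt_succ_iff.1 (Cardinal.mk_Iio_toType_ord_lt a)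
  have hIic : ∀ a : T, Cardinal.mk (Set.Iic a) ≤ κ := by
    intro a
    rw [← Set.Iio_insert]
    refine (Cardinal.mk_insert_le).trans ?_
    exact (add_le_add (hIio a) (Cardinal.one_lt_aleph0.le.trans hκ)).trans
      (Cardinal.add_eq_self hκ).le
  have hj : ∀ p : T, ∃ f : T → K, Set.InjOn f (Set.Iic p) := fun p =>
    aux_injOn _ (by rw [hK]; exact hIic p)
  have hi : ∀ a : T, ∃ f : AuxB T K → K, Set.InjOn f {b | b.1.1 < a} := by
    intro a
    refine aux_injOn _ ?_
    rw [hK]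
    have h1 : Cardinal.mk {b : AuxB T K | b.1.1 < a} ≤
        Cardinal.mk (Set.Iio a × Set.Iio a × AuxC K) := by
      refine Cardinal.mk_le_of_injective
        (f := fun b => (⟨b.1.1.1, b.2⟩, ⟨b.1.1.2.1, lt_of_le_of_lt b.1.2 b.2⟩, b.1.1.2.2)) ?_
      rintro ⟨⟨⟨p, q, c⟩, _⟩, _⟩ ⟨⟨⟨p', q', c'⟩, _⟩, _⟩ h
      have h1 : p = p' := congrArg (fun x => (x.1 : T)) h
      have h2 : q = q' := congrArg (fun x => (x.2.1 : T)) h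
      have h3 : c = c' := congrArg (fun x => x.2.2) h
      subst h1 h2 h3
      rfl
    refine h1.trans ?_
    rw [Cardinal.mk_prod, Cardinal.mk_prod, hC]
    simp only [Cardinal.lift_id]
    calc _ ≤ κ * (κ * κ) := mul_le_mul' (hIio a) (mul_le_mul' (hIio a) le_rfl)
      _ = κ := by rw [Cardinal.mul_eq_self hκ, Cardinal.mul_eq_self hκ]
  choose j hj using hj
  choose i hi using hi
  have hB : Cardinal.mk (AuxB T K) = Order.succ κ := by
    apply le_antisymm
    · refine (Cardinal.mk_subtype_le _).trans ?_
      rw [Cardinal.mk_prod, Cardinal.mk_prod, hC, hT]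
      simp only [Cardinal.lift_id]
      calc _ ≤ Order.succ κ * (Order.succ κ * Order.succ κ) :=
            mul_le_mul' le_rfl (mul_le_mul' le_rfl (Order.le_succ κ))
        _ = Order.succ κ := by rw [Cardinal.mul_eq_self hsucc, Cardinal.mul_eq_self hsucc]
    · refine hT.symm.le.trans ?_
      refine Cardinal.mk_le_of_injective
        (f := fun p : T => (⟨(p, p, Classical.arbitrary _), le_rfl⟩ : AuxB T K)) ?_
      intro p q h
      simp only [Subtype.mk.injEq, Prod.mk.injEq] at h
      exact h.1
  let C₀ : Set (AuxC K) := {c | c.1 = false}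
  have hC₀ : Cardinal.mk C₀ = κ := by
    rw [← hKB]
    refine Cardinal.mk_congr ⟨fun c => c.1.2, fun x => ⟨(false, x), rfl⟩, ?_, ?_⟩
    · rintro ⟨⟨c, x⟩, h⟩
      cases c
      · rfl
      · exact absurd h (by simp [C₀])
    · intro x; rfl
  have hC₁ : Cardinal.mk ↥(C₀ᶜ) = κ := by
    rw [← hKB]
    refine Cardinal.mk_congr ⟨fun c => c.1.2, fun x => ⟨(true, x), by simp [C₀]⟩, ?_, ?_⟩
    · rintro ⟨⟨c, x⟩, h⟩
      cases c
      · exact absurd rfl h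
      · rfl
    · intro x; rfl
  have hO : Cardinal.mk {o : Ordinal.{u} // o < κ.ord} = Cardinal.lift.{u+1} κ := by
    have := Cardinal.mk_Iio_ordinal κ.ord
    rw [Cardinal.card_ord] at this
    exact this
  have he : Nonempty ({o : Ordinal.{u} // o < κ.ord} ≃ C₀) := by
    rw [← Cardinal.lift_mk_eq', hO, hC₀]
    simp
  have hl : Nonempty ({o : Ordinal.{u} // o < κ.ord} ⊕ {o : Ordinal.{u} // o < κ.ord} ↪ T) := by
    rw [← Cardinal.lift_mk_le', Cardinal.mk_sum, hO, hT]
    simp only [Cardinal.lift_id, Cardinal.lift_lift, ← Cardinal.lift_add, Cardinal.add_eq_self hκ]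
    have := Cardinal.lift_le.{u+1}.2 (Order.le_succ κ)
    simpa using this
  obtain ⟨e⟩ := he
  obtain ⟨l⟩ := hl
  let Ex : T → T → AuxC K → Prop := fun p q c =>
    ∃ α β, β ≤ α ∧ ({p, q} : Set T) = {l (Sum.inl α), l (Sum.inr α)} ∧ c = (e β : AuxC K)
  have hE : ∀ p q c, Ex p q c → c.1 = false := by
    rintro p q c ⟨α, β, _, _, rfl⟩
    exact (e β).2
  have hsymm : ∀ p q c, Ex p q c ↔ Ex q p c := by
    intro p q c
    simp only [Ex, Set.pair_comm p q]
  have key : ∀ p q c, p ≠ q →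
      ((∃ b, auxF i j Ex p b = c ∧ auxF i j Ex q b = c) ↔ ¬ Ex p q c) := by
    intro p q c hpq
    rcases lt_or_gt_of_ne hpq with h | h
    · rw [hsymm, ← auxF_ex i j Ex hj hE h c]
      exact exists_congr fun b => and_comm
    · exact auxF_ex i j Ex hj hE h c
  refine ⟨T, AuxB T K, AuxC K, C₀, e, fun α => l (Sum.inl α), fun α => l (Sum.inr α),
    auxF i j Ex, hT, hB, hC, hC₀, hC₁, ?_, ?_, ?_, ?_, ?_, ?_⟩
  · exact l.injective.comp Sum.inl_injective
  · exact l.injective.comp Sum.inr_injective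
  · intro α β h
    exact absurd (l.injective h) Sum.inl_ne_inr
  · rintro ⟨a₁, a₂, b₁, b₂, ha, hb, h1, h2, h3⟩
    rcases lt_or_gt_of_ne ha with h | h
    · exact hb (auxF_uniq i j Ex hj hi h b₁ b₂ _ h2.symm rfl h3.symm h1.symm)
    · exact hb (auxF_uniq i j Ex hj hi h b₁ b₂ _ rfl h2.symm h1.symm h3.symm)
  · intro α c
    rw [key _ _ _ (fun h => absurd (l.injective h) Sum.inl_ne_inr)]
    constructor
    · intro h
      by_cases hc : c ∈ C₀
      · right
        refine ⟨e.symm ⟨c, hc⟩, ?_, by simp⟩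
        by_contra hlt
        exact h ⟨α, e.symm ⟨c, hc⟩, not_lt.1 hlt, rfl, by simp⟩
      · exact Or.inl hc
    · rintro h ⟨α', β, hβ, hp, rfl⟩
      have hα : α = α' := by
        have : l (Sum.inl α) ∈ ({l (Sum.inl α'), l (Sum.inr α')} : Set T) := by
          rw [← hp]; simp
        simpa using this
      subst hα
      rcases h with h | ⟨γ, hγ, h⟩
      · exact h (e β).2
      · have := e.injective (Subtype.ext h)
        subst this
        exact absurd hγ (not_lt.2 hβ)
  · intro a a' hne' h c
    rw [key _ _ _ hne']
    rintro ⟨α, β, _, hp, _⟩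
    exact h α hp
end

section
/- Let κ be an infinite cardinal and suppose (A, B, C, F, C₀, e, l₁, l₂) and (A', B', C', F', C₀', e', l₁', l₂') are two tuples each satisfying the Step-I conditions for κ: #A = #B = κ⁺, #C = κ, C₀ ⊆ C with #C₀ = #(C \ C₀) = κ, e a bijection from the ordinals below κ onto C₀, l₁, l₂ functions from the ordinals below κ to A with pairwise distinct values, F : A → B → C satisfying (*), and: (ii) for every α < κ and c ∈ C, a monochromatic 2-path on l₁ α, l₂ α colored c exists if and only if c ∉ C₀ or c = e β for some β with α < β < κ; (iii) for every pair of distinct a, a' ∈ A not of the form {l₁ α, l₂ α} and every c ∈ C, a monochromatic 2-path on a, a' colored c exists. If σ : A ≃ A', τ : B ≃ B', ρ : C ≃ C' are bijections with ρ (F a b) = F' (σ a) (τ b) for all a, b, then ρ maps C₀ onto C₀', ρ (e α) = e' α for every α < κ, and {σ (l₁ α), σ (l₂ α)} = {l₁' α, l₂' α} for every α < κ. -/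
universe u

/-- The data of a Step-I model: a coloring `F`, a distinguished set of
colors `C₀` enumerated by `e`, and the distinguished pairs `l₁ α, l₂ α`. -/
structure StepIData (κ : Cardinal.{u}) (A B C : Type u) where
  F : A → B → C
  C₀ : Set C
  e : {o : Ordinal.{u} // o < κ.ord} ≃ C₀
  l₁ : {o : Ordinal.{u} // o < κ.ord} → A
  l₂ : {o : Ordinal.{u} // o < κ.ord} → A

/-- The Step-I conditions (Lemma `Step1` of the paper). -/
def StepIConds (κ : Cardinal.{u}) {A B C : Type u} (d : StepIData κ A B C) : Prop :=
  Cardinal.mk A = Order.succ κ ∧ Cardinal.mk B = Order.succ κ ∧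
  Cardinal.mk C = κ ∧
  Cardinal.mk d.C₀ = κ ∧ Cardinal.mk ↥(d.C₀ᶜ) = κ ∧
  Function.Injective d.l₁ ∧ Function.Injective d.l₂ ∧
  (∀ α β, d.l₁ α ≠ d.l₂ β) ∧
  NoMonoK22 d.F ∧
  (∀ (α : {o : Ordinal.{u} // o < κ.ord}) (c : C),
    (∃ b : B, d.F (d.l₁ α) b = c ∧ d.F (d.l₂ α) b = c) ↔
      (c ∉ d.C₀ ∨ ∃ β, α < β ∧ c = (d.e β : C))) ∧
  (∀ a a' : A, a ≠ a' →
    (∀ α, ({a, a'} : Set A) ≠ {d.l₁ α, d.l₂ α}) →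
    ∀ c : C, ∃ b : B, d.F a b = c ∧ d.F a' b = c)

theorem miss_iff {κ : Cardinal.{u}} {A B C : Type u} {d : StepIData κ A B C}
    (hd : StepIConds κ d) (α : {o : Ordinal.{u} // o < κ.ord}) (c : C) :
    (¬ ∃ b : B, d.F (d.l₁ α) b = c ∧ d.F (d.l₂ α) b = c) ↔ ∃ β, β ≤ α ∧ c = (d.e β : C) := by
  obtain ⟨-, -, -, -, -, -, -, -, -, h, -⟩ := hd
  rw [h α c]
  constructor
  · intro hn
    push Not at hn
    obtain ⟨h1, h2⟩ := hn
    refine ⟨d.e.symm ⟨c, h1⟩, ?_, by simp⟩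
    by_contra hlt
    exact h2 _ (not_le.mp hlt) (by simp)
  · rintro ⟨β, hβ, rfl⟩ (h1 | ⟨γ, hγ, h1⟩)
    · exact h1 (d.e β).2
    · have := d.e.injective (Subtype.ext h1)
      subst this
      exact absurd hγ (not_lt.mpr hβ)

theorem key_step {κ : Cardinal.{u}} {A B C A' B' C' : Type u}
    {d : StepIData κ A B C} {d' : StepIData κ A' B' C'}
    (hd : StepIConds κ d) (hd' : StepIConds κ d')
    (σ : A ≃ A') (τ : B ≃ B') (ρ : C ≃ C')
    (hiso : ∀ (a : A) (b : B), ρ (d.F a b) = d'.F (σ a) (τ b))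
    (α : {o : Ordinal.{u} // o < κ.ord}) :
    ∃ γ, ({σ (d.l₁ α), σ (d.l₂ α)} : Set A') = {d'.l₁ γ, d'.l₂ γ} ∧
      ∀ c, (∃ β, β ≤ α ∧ c = (d.e β : C)) ↔ ∃ β, β ≤ γ ∧ ρ c = (d'.e β : C') := by
  have tr : ∀ a a' c, (∃ b, d.F a b = c ∧ d.F a' b = c) ↔
      ∃ b, d'.F (σ a) b = ρ c ∧ d'.F (σ a') b = ρ c := by
    intro a a' c
    rw [← τ.exists_congr_right]
    simp [← hiso]
  have hne : d.l₁ α ≠ d.l₂ α := by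
    obtain ⟨-, -, -, -, -, -, -, h, -, -, -⟩ := hd
    exact h α α
  have hex : ∃ γ, ({σ (d.l₁ α), σ (d.l₂ α)} : Set A') = {d'.l₁ γ, d'.l₂ γ} := by
    by_contra hn
    push Not at hn
    obtain ⟨-, -, -, -, -, -, -, -, -, -, h⟩ := hd'
    have h1 := h _ _ (σ.injective.ne hne) hn (ρ (d.e α))
    rw [← tr] at h1
    exact (miss_iff hd α (d.e α)).mpr ⟨α, le_rfl, rfl⟩ h1
  obtain ⟨γ, hγ⟩ := hex
  refine ⟨γ, hγ, fun c => ?_⟩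
  rw [← miss_iff hd, ← miss_iff hd', tr]
  have hall : ∀ b, (d'.F (σ (d.l₁ α)) b = ρ c ∧ d'.F (σ (d.l₂ α)) b = ρ c) ↔
      (d'.F (d'.l₁ γ) b = ρ c ∧ d'.F (d'.l₂ γ) b = ρ c) := by
    intro b
    have e1 : (∀ x ∈ ({σ (d.l₁ α), σ (d.l₂ α)} : Set A'), d'.F x b = ρ c) ↔
      (∀ x ∈ ({d'.l₁ γ, d'.l₂ γ} : Set A'), d'.F x b = ρ c) := by rw [hγ]
    simpa using e1
  simp only [hall]

theorem strict_of {κ : Cardinal.{u}} {C C' : Type u} {S : Set C} {S' : Set C'}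
    (e : {o : Ordinal.{u} // o < κ.ord} ≃ S) (e' : {o : Ordinal.{u} // o < κ.ord} ≃ S')
    (ρ : C ≃ C') (f : {o : Ordinal.{u} // o < κ.ord} → {o : Ordinal.{u} // o < κ.ord})
    (hf : ∀ α c, (∃ β, β ≤ α ∧ c = (e β : C)) ↔ ∃ β, β ≤ f α ∧ ρ c = (e' β : C')) :
    StrictMono f := by
  intro α γ hlt
  by_contra hn
  obtain ⟨β, hβ, h⟩ := (hf γ (e γ)).mp ⟨γ, le_rfl, rfl⟩
  obtain ⟨δ, hδ, h'⟩ := (hf α (e γ)).mpr ⟨β, hβ.trans (not_lt.mp hn), h⟩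
  have := e.injective (Subtype.ext h')
  subst this
  exact absurd hlt (not_lt.mpr hδ)

theorem stmt15 (κ : Cardinal.{u}) (hκ : Cardinal.aleph0 ≤ κ)
    {A B C A' B' C' : Type u}
    (d : StepIData κ A B C) (d' : StepIData κ A' B' C')
    (hd : StepIConds κ d) (hd' : StepIConds κ d')
    (σ : A ≃ A') (τ : B ≃ B') (ρ : C ≃ C')
    (hiso : ∀ (a : A) (b : B), ρ (d.F a b) = d'.F (σ a) (τ b)) :
    ρ '' d.C₀ = d'.C₀ ∧
    (∀ α, ρ (d.e α : C) = (d'.e α : C')) ∧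
    (∀ α, ({σ (d.l₁ α), σ (d.l₂ α)} : Set A') = {d'.l₁ α, d'.l₂ α}) := by
  choose f hf1 hf using key_step hd hd' σ τ ρ hiso
  have hiso' : ∀ a b, ρ.symm (d'.F a b) = d.F (σ.symm a) (τ.symm b) := by
    intro a b
    rw [Equiv.symm_apply_eq, hiso]
    simp
  choose g hg1 hg using key_step hd' hd σ.symm τ.symm ρ.symm hiso'
  have sf := strict_of d.e d'.e ρ f hf
  have sg := strict_of d'.e d.e ρ.symm g hg
  have hid : ∀ α, f α = α := by
    intro α
    apply le_antisymm _ (sf.le_apply)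
    refine (sg.le_apply (x := f α)).trans ?_
    obtain ⟨β, hβ, h⟩ := (hg (f α) (ρ (d.e (g (f α))))).mpr ⟨_, le_rfl, by simp⟩
    obtain ⟨δ, hδ, h'⟩ := (hf α (d.e (g (f α)))).mpr ⟨β, hβ, h⟩
    rw [d.e.injective (Subtype.ext h')]
    exact hδ
  simp only [hid] at hf hf1
  have he : ∀ α, ρ (d.e α : C) = (d'.e α : C') := by
    intro α
    obtain ⟨δ, hδ, h⟩ := (hf α (d.e α)).mp ⟨α, le_rfl, rfl⟩
    obtain ⟨ε, hε, h'⟩ := (hf δ (d.e α)).mpr ⟨δ, le_rfl, h⟩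
    have := d.e.injective (Subtype.ext h')
    subst this
    rw [h, le_antisymm hδ hε]
  refine ⟨?_, he, hf1⟩
  ext c
  constructor
  · rintro ⟨x, hx, rfl⟩
    have := he (d.e.symm ⟨x, hx⟩)
    simp only [Equiv.apply_symm_apply] at this
    rw [this]
    exact (d'.e _).2
  · intro hc
    refine ⟨d.e (d'.e.symm ⟨c, hc⟩), (d.e _).2, ?_⟩
    rw [he]
    simp
end

section
/- Let κ be an infinite cardinal, let C be a type with #C = κ, let C₀ ⊆ C with #C₀ = κ and #(C \ C₀) = κ, and let S be a family of subsets S_α ⊆ C₀ indexed by the ordinals α with 0 < α < κ⁺, pairwise distinct, with #(S_α) = κ and #(C₀ \ S_α) = κ for each α. Then there exist: types A, B with #A = #B = κ⁺; a bijection e from the ordinals below κ onto C₀; functions l₁, l₂ from the ordinals below κ to A with pairwise distinct values; an injective function m from the ordinals below κ⁺ to A whose range is disjoint from {l₁ α, l₂ α : α < κ} and with #(A \ range m) = κ⁺; and F : A → B → C such that: (i) F satisfies (*); (ii) for every α < κ and c ∈ C, a monochromatic 2-path on l₁ α, l₂ α colored c exists if and only if c ∉ C₀ or c = e β for some β with α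 < β < κ; (iii) for every ordinal α with 0 < α < κ⁺ and every c ∈ C, a monochromatic 2-path on m 0, m α colored c exists if and only if c ∈ S_α; (iv) for all distinct a, a' ∈ A such that {a, a'} is neither of the form {l₁ α, l₂ α} (α < κ) nor of the form {m 0, m α} (0 < α < κ⁺), and every c ∈ C, a monochromatic 2-path on a, a' colored c exists. -/
universe u

lemma ord_succ_pos (κ : Cardinal.{u}) : (0 : Ordinal.{u}) < (Order.succ κ).ord := by
  rw [Cardinal.lt_ord]
  simp [Order.bot_lt_succ κ]

/-- The ordinal `0` as an ordinal below `κ⁺`. -/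
def ordZero (κ : Cardinal.{u}) : {o : Ordinal.{u} // o < (Order.succ κ).ord} :=
  ⟨0, ord_succ_pos κ⟩

open Cardinal in
lemma avoid_inj {κ : Cardinal.{u}} (hκ : ℵ₀ ≤ κ) {C : Type u} (hC : #C = κ) {X : Type u}
    (X' : Set X) (hX : #X' ≤ κ) (g h : X → C) :
    ∃ f : X → C, Set.InjOn f X' ∧ ∀ x ∈ X', f x ≠ g x ∧ f x ≠ h x := by
  classical
  have h1 : #(C × ℕ) = #C := by
    rw [mk_prod, hC]; simp [Cardinal.mul_aleph0_eq hκ]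
  obtain ⟨e⟩ := Cardinal.eq.1 h1
  have h2 : #X' ≤ #C := hC ▸ hX
  obtain ⟨i⟩ := h2
  have : ∀ x : X, ∃ n : ℕ, ∀ hx : x ∈ X', e (i ⟨x, hx⟩, n) ≠ g x ∧ e (i ⟨x, hx⟩, n) ≠ h x := by
    intro x
    by_cases hx : x ∈ X'
    · have hinj : Function.Injective (fun n : ℕ => e (i ⟨x, hx⟩, n)) := by
        intro a b hab
        simpa using hab
      have hfin : ((fun n : ℕ => e (i ⟨x, hx⟩, n)) ⁻¹' {g x, h x}).Finite :=
        Set.Finite.preimage hinj.injOn (by simp)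
      obtain ⟨n, hn⟩ := hfin.exists_notMem
      refine ⟨n, fun _ => ?_⟩
      simpa using hn
    · exact ⟨0, fun h => absurd h hx⟩
  choose n hn using this
  refine ⟨fun x => if hx : x ∈ X' then e (i ⟨x, hx⟩, n x) else g x, ?_, ?_⟩
  · intro x hx y hy hxy
    simp only [hx, hy, dif_pos] at hxy
    have := congrArg Prod.fst (e.injective hxy)
    simpa using i.injective this
  · intro x hx
    simp only [hx, dif_pos]
    exact hn x hx

noncomputable def pairTime {A : Type u} (t : A → Ordinal.{u}) (s : Sym2 A) : Ordinal.{u} :=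
  Sym2.lift ⟨fun x y => max (t x) (t y), fun _ _ => max_comm _ _⟩ s

lemma pairTime_mk {A : Type u} (t : A → Ordinal.{u}) (x y : A) :
    pairTime t s(x, y) = max (t x) (t y) := rfl

lemma le_pairTime {A : Type u} (t : A → Ordinal.{u}) {s : Sym2 A} {x : A} (h : x ∈ s) :
    t x ≤ pairTime t s := by
  induction s with
  | h a b =>
    rw [pairTime_mk]
    rcases Sym2.mem_iff.1 h with rfl | rfl <;> simp

open Cardinal in
lemma core (κ : Cardinal.{u}) (hκ : ℵ₀ ≤ κ) {A C : Type u} (hA : #A = Order.succ κ) (hC : #C = κ)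
    (t : A → Ordinal.{u}) (ht : ∀ a, #{x | t x ≤ t a} ≤ κ) (a0 : A) (h0 : t a0 = 0)
    (P : Sym2 A → Set C)
    (hP : ∀ x y c, c ∉ P s(x, y) → (t x = 0 ∧ t y = 0) ∨ x = a0 ∨ y = a0)
    (G : Set A) (hG : #G = Order.succ κ) (x0 : A)
    (hG' : ∀ y ∈ G, x0 ≠ y ∧ P s(x0, y) = Set.univ) :
    ∃ (B : Type u) (F : A → B → C), #B = Order.succ κ ∧ NoMonoK22 F ∧
      ∀ x y, x ≠ y → ∀ c, (∃ b, F x b = c ∧ F y b = c) ↔ c ∈ P s(x, y) := by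
  classical
  have hCne : Nonempty C := by
    rw [← mk_ne_zero_iff, hC]; exact (aleph0_pos.trans_le hκ).ne'
  let cs : C := hCne.some
  -- columns
  have hψ : ∀ d : Sym2 A × C, ∃ f : A → C, (∀ u ∈ d.1, f u = d.2) ∧
      ∀ u v, u ≠ v → t u ≤ pairTime t d.1 → t v ≤ pairTime t d.1 → f u = f v →
        u ∈ d.1 ∧ v ∈ d.1 := by
    rintro ⟨s, c⟩
    have hX : #{u | t u ≤ pairTime t s} ≤ κ := by
      induction s with
      | h x y =>
        rw [pairTime_mk]
        rcases le_total (t x) (t y) with h | h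
        · rw [max_eq_right h]; exact ht y
        · rw [max_eq_left h]; exact ht x
    obtain ⟨f, hf, hf'⟩ := avoid_inj hκ hC _ hX (fun _ => c) (fun _ => c)
    refine ⟨fun u => if u ∈ s then c else f u, fun u hu => by simp only at hu; simp [hu], ?_⟩
    intro u v huv hu hv h
    simp only at hu hv h ⊢
    by_cases h1 : u ∈ s <;> by_cases h2 : v ∈ s
    · exact ⟨h1, h2⟩
    · simp only [h1, h2, if_true, if_false] at h
      exact absurd h.symm (hf' v hv).1
    · simp only [h1, h2, if_true, if_false] at h
      exact absurd h (hf' u hu).1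
    · simp only [h1, h2, if_false] at h
      exact absurd (hf hu hv h) huv
  choose ψ hψ1 hψ2 using hψ
  -- rows
  have hφ : ∀ a : A, ∃ f : Sym2 A × C → C, Set.InjOn f {d | pairTime t d.1 < t a} ∧
      ∀ d ∈ {d : Sym2 A × C | pairTime t d.1 < t a}, f d ≠ ψ d a0 ∧ f d ≠ cs := by
    intro a
    refine avoid_inj hκ hC _ ?_ _ _
    let X := {x | t x ≤ t a}
    have hsub : {d : Sym2 A × C | pairTime t d.1 < t a} ⊆
        Set.range (fun p : X × X × C => ((s(p.1.1, p.2.1.1), p.2.2) : Sym2 A × C)) := by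
      rintro ⟨s, c⟩ hd
      induction s with
      | h x y =>
        simp only [Set.mem_ofPred_eq, pairTime_mk, max_lt_iff] at hd
        exact ⟨(⟨x, hd.1.le⟩, ⟨y, hd.2.le⟩, c), rfl⟩
    refine (mk_le_mk_of_subset hsub).trans (mk_range_le.trans ?_)
    simp only [mk_prod, lift_id, hC]
    calc #X * (#X * κ) ≤ κ * (κ * κ) := by gcongr <;> exact ht a
      _ = κ := by rw [mul_eq_self hκ, mul_eq_self hκ]
  choose φ hφ1 hφ2 using hφ
  let F : A → Sym2 A × C → C := fun a d => if pairTime t d.1 < t a then φ a d else ψ d a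
  have F1 : ∀ a d, pairTime t d.1 < t a → F a d = φ a d := fun a d h => if_pos h
  have F2 : ∀ a d, t a ≤ pairTime t d.1 → F a d = ψ d a := fun a d h => if_neg (not_lt.2 h)
  -- good demands
  have hgood : ∃ Good : Sym2 A × C → Prop, ∀ d, Good d ↔ (¬ d.1.IsDiag ∧ d.2 ∈ P d.1 ∧
      ∀ d', pairTime t d'.1 < pairTime t d.1 → Good d' → ¬ ∀ u ∈ d.1, F u d' = d.2) := by
    have wf : WellFounded (fun d' d : Sym2 A × C => pairTime t d'.1 < pairTime t d.1) :=
      InvImage.wf (fun d : Sym2 A × C => pairTime t d.1) Ordinal.lt_wf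
    refine ⟨wf.fix (fun d ih => ¬ d.1.IsDiag ∧ d.2 ∈ P d.1 ∧
      ∀ d' (h : pairTime t d'.1 < pairTime t d.1), ih d' h → ¬ ∀ u ∈ d.1, F u d' = d.2), ?_⟩
    intro d
    conv_lhs => rw [wf.fix_eq]
  obtain ⟨Good, hGood⟩ := hgood
  -- old pairs
  have hold : ∀ d, ∀ u v, u ≠ v → t u ≤ pairTime t d.1 → t v ≤ pairTime t d.1 →
      F u d = F v d → d = (s(u, v), F u d) := by
    intro d u v huv hu hv h
    have h' := h
    rw [F2 u d hu, F2 v d hv] at h'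
    obtain ⟨h1, h2⟩ := hψ2 d u v huv hu hv h'
    refine Prod.ext ((Sym2.mem_and_mem_iff huv).1 ⟨h1, h2⟩) ?_
    simp only
    rw [F2 u d hu, hψ1 d u h1]
  have hcs : ∀ y ∈ G, Good (s(x0, y), cs) := by
    intro y hy
    obtain ⟨h1, h2⟩ := hG' y hy
    rw [hGood]
    refine ⟨by simpa using h1, by simp [h2], ?_⟩
    intro d' hd' _ hall
    simp only [pairTime_mk, lt_max_iff] at hd'
    rcases hd' with h | h
    · have := hall x0 (by simp)
      rw [F1 _ _ h] at this
      exact (hφ2 x0 d' h).2 this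
    · have := hall y (by simp)
      rw [F1 _ _ h] at this
      exact (hφ2 y d' h).2 this
  have hs : ℵ₀ ≤ Order.succ κ := hκ.trans (Order.le_succ κ)
  refine ⟨{d // Good d}, fun a b => F a b.1, le_antisymm ?_ ?_, ?_, ?_⟩
  · have hsurj : Function.Surjective (fun p : A × A × C => ((s(p.1, p.2.1), p.2.2) : Sym2 A × C)) := by
      rintro ⟨s, c⟩
      induction s with
      | h x y => exact ⟨(x, y, c), rfl⟩
    refine (mk_subtype_le _).trans ((mk_le_of_surjective hsurj).trans ?_)
    simp only [mk_prod, lift_id, hC, hA]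
    calc Order.succ κ * (Order.succ κ * κ)
        ≤ Order.succ κ * (Order.succ κ * Order.succ κ) := by gcongr; exact Order.le_succ κ
      _ = Order.succ κ := by rw [mul_eq_self hs, mul_eq_self hs]
  · rw [← hG]
    refine mk_le_of_injective (f := fun y : G => (⟨(s(x0, y.1), cs), hcs y.1 y.2⟩ : {d // Good d})) ?_
    intro y y' h
    have h' := congrArg (fun d : {d // Good d} => d.1.1) h
    exact Subtype.ext (Sym2.congr_right.1 h')
  · rintro ⟨a₁, a₂, b₁, b₂, ha, hb, e1, e2, e3⟩
    simp only at e1 e2 e3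
    have key : ∀ b₁ b₂ : {d // Good d}, b₁ ≠ b₂ → pairTime t b₁.1.1 ≤ pairTime t b₂.1.1 →
        F a₁ b₁.1 = F a₁ b₂.1 → F a₁ b₁.1 = F a₂ b₁.1 → F a₁ b₁.1 = F a₂ b₂.1 → False := by
      intro b₁ b₂ hb hle e1 e2 e3
      have row : ∀ a, F a b₁.1 = F a b₂.1 → t a ≤ pairTime t b₂.1.1 := by
        intro a h
        by_contra hlt
        push Not at hlt
        have hlt1 := hle.trans_lt hlt
        rw [F1 _ _ hlt, F1 _ _ hlt1] at h
        exact hb (Subtype.ext (hφ1 a hlt1 hlt h))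
      have r1 := row a₁ e1
      have r2 := row a₂ (e2.symm.trans e3)
      have q2 := hold b₂.1 a₁ a₂ ha r1 r2 (e1.symm.trans e3)
      rcases hle.lt_or_eq with hlt | heq
      · refine ((hGood b₂.1).1 b₂.2).2.2 b₁.1 hlt b₁.2 ?_
        intro u hu
        have hc : b₂.1.2 = F a₁ b₂.1 := congrArg Prod.snd q2
        have hs : b₂.1.1 = s(a₁, a₂) := congrArg Prod.fst q2
        rw [hs, Sym2.mem_iff] at hu
        rw [hc]
        rcases hu with rfl | rfl
        · exact e1
        · exact e2.symm.trans e1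
      · have q1 := hold b₁.1 a₁ a₂ ha (heq ▸ r1) (heq ▸ r2) e2
        rw [e1] at q1
        exact hb (Subtype.ext (q1.trans q2.symm))
    rcases le_total (pairTime t b₁.1.1) (pairTime t b₂.1.1) with h | h
    · exact key b₁ b₂ hb h e1 e2 e3
    · exact key b₂ b₁ hb.symm h e1.symm (e1.symm.trans e3) (e1.symm.trans e2)
  · intro x y hxy c
    constructor
    · rintro ⟨b, hx, hy⟩
      simp only at hx hy
      by_contra hc
      have hz : ∀ z, t z = 0 → t z ≤ pairTime t b.1.1 := fun z h => by rw [h]; exact zero_le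
      have aux : ∀ z, F z b.1 = F a0 b.1 → t z ≤ pairTime t b.1.1 := by
        intro z h
        by_contra hlt
        push Not at hlt
        rw [F1 _ _ hlt, F2 _ _ (hz a0 h0)] at h
        exact (hφ2 z b.1 hlt).1 h
      have hh : t x ≤ pairTime t b.1.1 ∧ t y ≤ pairTime t b.1.1 := by
        rcases hP x y c hc with h | rfl | rfl
        · exact ⟨hz x h.1, hz y h.2⟩
        · exact ⟨hz _ h0, aux y (hy.trans hx.symm)⟩
        · exact ⟨aux x (hx.trans hy.symm), hz _ h0⟩
      have q := hold b.1 x y hxy hh.1 hh.2 (hx.trans hy.symm)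
      have hm := ((hGood b.1).1 b.2).2.1
      have q1 : b.1.1 = s(x, y) := congrArg Prod.fst q
      have q2 : b.1.2 = F x b.1 := congrArg Prod.snd q
      rw [q1, q2, hx] at hm
      exact hc hm
    · intro hc
      by_cases hg : Good (s(x, y), c)
      · refine ⟨⟨_, hg⟩, ?_, ?_⟩
        · simp only
          rw [F2 _ _ (le_pairTime t (by simp)), hψ1 _ x (by simp)]
        · simp only
          rw [F2 _ _ (le_pairTime t (by simp)), hψ1 _ y (by simp)]
      · rw [hGood] at hg
        push Not at hg
        obtain ⟨d', _, hd', hall⟩ := hg (by simpa using hxy) hc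
        exact ⟨⟨d', hd'⟩, hall x (by simp), hall y (by simp)⟩

theorem stmt16 (κ : Cardinal.{u}) (hκ : Cardinal.aleph0 ≤ κ) {C : Type u}
    (hC : Cardinal.mk C = κ) (C₀ : Set C)
    (hC₀ : Cardinal.mk C₀ = κ) (hC₀c : Cardinal.mk ↥(C₀ᶜ) = κ)
    (S : {o : Ordinal.{u} // o < (Order.succ κ).ord} → Set C)
    (hSsub : ∀ α, 0 < α.1 → S α ⊆ C₀)
    (hSdist : ∀ α β, 0 < α.1 → 0 < β.1 → α ≠ β → S α ≠ S β)
    (hScard : ∀ α, 0 < α.1 → Cardinal.mk (S α) = κ)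
    (hScardc : ∀ α, 0 < α.1 → Cardinal.mk ↥(C₀ \ S α) = κ) :
    ∃ (A B : Type u)
      (e : {o : Ordinal.{u} // o < κ.ord} ≃ C₀)
      (l₁ l₂ : {o : Ordinal.{u} // o < κ.ord} → A)
      (m : {o : Ordinal.{u} // o < (Order.succ κ).ord} → A)
      (F : A → B → C),
      Cardinal.mk A = Order.succ κ ∧ Cardinal.mk B = Order.succ κ ∧
      -- the points `l₁ α`, `l₂ α` (over all `α < κ`) are pairwise distinct
      Function.Injective l₁ ∧ Function.Injective l₂ ∧
      (∀ α β, l₁ α ≠ l₂ β) ∧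
      -- `m` is injective with range disjoint from the `l`-points and
      -- co-large in `A`
      Function.Injective m ∧
      (∀ γ α, m γ ≠ l₁ α ∧ m γ ≠ l₂ α) ∧
      Cardinal.mk ↥((Set.range m)ᶜ) = Order.succ κ ∧
      -- (i)
      NoMonoK22 F ∧
      -- (ii)
      (∀ (α : {o : Ordinal.{u} // o < κ.ord}) (c : C),
        (∃ b : B, F (l₁ α) b = c ∧ F (l₂ α) b = c) ↔
          (c ∉ C₀ ∨ ∃ β, α < β ∧ c = (e β : C))) ∧
      -- (iii)
      (∀ α, 0 < α.1 → ∀ c : C,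
        (∃ b : B, F (m (ordZero κ)) b = c ∧ F (m α) b = c) ↔ c ∈ S α) ∧
      -- (iv)
      (∀ a a' : A, a ≠ a' →
        (∀ α, ({a, a'} : Set A) ≠ {l₁ α, l₂ α}) →
        (∀ α, 0 < α.1 → ({a, a'} : Set A) ≠ {m (ordZero κ), m α}) →
        ∀ c : C, ∃ b : B, F a b = c ∧ F a' b = c) := by
  classical
  let W := (Order.succ κ).ord.ToType
  let K := κ.ord.ToType
  have hs : Cardinal.aleph0 ≤ Order.succ κ := hκ.trans (Order.le_succ κ)
  let EW : {o : Ordinal.{u} // o < (Order.succ κ).ord} ≃ W := Ordinal.ToType.mk.toEquiv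
  let EK : {o : Ordinal.{u} // o < κ.ord} ≃ K := Ordinal.ToType.mk.toEquiv
  have hW : Cardinal.mk W = Order.succ κ := by simp [W]
  have hK : Cardinal.mk K = κ := by simp [K]
  obtain ⟨e'⟩ := Cardinal.eq.1 (hK.trans hC₀.symm)
  let e := EK.trans e'
  let A := (W × Bool) ⊕ (K × Bool)
  let l₁ : {o : Ordinal.{u} // o < κ.ord} → A := fun o => Sum.inr (EK o, true)
  let l₂ : {o : Ordinal.{u} // o < κ.ord} → A := fun o => Sum.inr (EK o, false)
  let m : {o : Ordinal.{u} // o < (Order.succ κ).ord} → A := fun o => Sum.inl (EW o, true)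
  let t : A → Ordinal.{u} := Sum.elim (fun p => (EW.symm p.1).1) (fun _ => 0)
  have tm : ∀ γ, t (m γ) = γ.1 := fun γ => by simp [t, m]
  have hA : Cardinal.mk A = Order.succ κ := by
    simp only [A, Cardinal.mk_sum, Cardinal.mk_prod, Cardinal.lift_id, hW, hK, Cardinal.mk_bool,
      Cardinal.lift_ofNat, Cardinal.lift_uzero]
    have h2 : (2 : Cardinal.{u}) ≤ κ := (Cardinal.ofNat_lt_aleph0 (n := 2)).le.trans hκ
    have h2' : (2 : Cardinal.{u}) ≤ Order.succ κ := h2.trans (Order.le_succ κ)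
    rw [Cardinal.mul_eq_left hs h2' (by simp), Cardinal.mul_eq_left hκ h2 (by simp)]
    exact Cardinal.add_eq_left hs (Order.le_succ κ)
  have hG : Cardinal.mk (Set.range (fun w : W => (Sum.inl (w, false) : A))) = Order.succ κ := by
    rw [Cardinal.mk_range_eq _ (fun a b h => by simpa using h), hW]
  have l1inj : Function.Injective l₁ := fun a b h => EK.injective (congrArg Prod.fst (Sum.inr.inj h))
  have l2inj : Function.Injective l₂ := fun a b h => EK.injective (congrArg Prod.fst (Sum.inr.inj h))
  have minj : Function.Injective m := fun a b h => EW.injective (congrArg Prod.fst (Sum.inl.inj h))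
  have hl : ∀ α β, l₁ α ≠ l₂ β := fun α β h => Bool.noConfusion (congrArg Prod.snd (Sum.inr.inj h))
  have hml : ∀ γ α, m γ ≠ l₁ α ∧ m γ ≠ l₂ α := fun γ α => by simp [l₁, l₂, m]
  have hmf : ∀ γ w, m γ ≠ Sum.inl (w, false) := fun γ w h =>
    Bool.noConfusion (congrArg Prod.snd (Sum.inl.inj h))
  have hcol : Cardinal.mk ↥((Set.range m)ᶜ) = Order.succ κ := by
    refine le_antisymm ((Cardinal.mk_set_le _).trans hA.le) (hG.ge.trans ?_)
    refine Cardinal.mk_le_mk_of_subset ?_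
    rintro _ ⟨w, rfl⟩ ⟨o, ho⟩
    exact Bool.noConfusion (congrArg Prod.snd (Sum.inl.inj ho))
  let P : Sym2 A → Set C := fun s => {c | (∀ α, s = s(l₁ α, l₂ α) → (c ∉ C₀ ∨ ∃ β, α < β ∧ c = (e β : C)))
    ∧ (∀ α, 0 < α.1 → s = s(m (ordZero κ), m α) → c ∈ S α)}
  have ht : ∀ a, Cardinal.mk {x | t x ≤ t a} ≤ κ := by
    intro a
    have hta : t a < (Order.succ κ).ord := by
      rcases a with a | a
      · exact (EW.symm a.1).2
      · exact ord_succ_pos κ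
    let X : Set W := {w | (EW.symm w).1 ≤ t a}
    have hX : Cardinal.mk X ≤ κ := by
      have hlim : Order.succ (t a) < (Order.succ κ).ord :=
        (Cardinal.isSuccLimit_ord hs).succ_lt hta
      have hc : (Order.succ (t a)).card ≤ κ := Order.lt_succ_iff.1 (Cardinal.lt_ord.1 hlim)
      have h1 := Cardinal.mk_Iio_ordinal (Order.succ (t a))
      have h3 : Cardinal.lift.{u+1} (Cardinal.mk X) ≤
          Cardinal.lift.{u} (Cardinal.mk (Set.Iio (Order.succ (t a)))) :=
        Cardinal.lift_mk_le_lift_mk_of_injective (f := fun w : X =>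
          (⟨(EW.symm w.1).1, Set.mem_Iio.2 (Order.lt_succ_iff.2 w.2)⟩ : Set.Iio (Order.succ (t a)))) (by
            intro w w' h
            have h' : (EW.symm w.1).1 = (EW.symm w'.1).1 := congrArg (fun z : Set.Iio (Order.succ (t a)) => z.1) h
            exact Subtype.ext (EW.symm.injective (Subtype.ext h')))
      rw [h1] at h3
      simp only [Cardinal.lift_lift] at h3
      exact (Cardinal.lift_le.1 h3).trans hc
    have hsub : {x | t x ≤ t a} ⊆ Set.range
        (Sum.map (fun p : X × Bool => (p.1.1, p.2)) id : (X × Bool) ⊕ (K × Bool) → A) := by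
      rintro (⟨w, b⟩ | k) hx
      · exact ⟨Sum.inl (⟨w, hx⟩, b), rfl⟩
      · exact ⟨Sum.inr k, rfl⟩
    refine (Cardinal.mk_le_mk_of_subset hsub).trans (Cardinal.mk_range_le.trans ?_)
    simp only [Cardinal.mk_sum, Cardinal.mk_prod, Cardinal.lift_id, hK, Cardinal.mk_bool,
      Cardinal.lift_ofNat, Cardinal.lift_uzero]
    have h2 : (2 : Cardinal.{u}) ≤ κ := (Cardinal.ofNat_lt_aleph0 (n := 2)).le.trans hκ
    rw [Cardinal.mul_eq_left hκ h2 (by simp)]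
    refine Cardinal.add_le_of_le hκ ?_ le_rfl
    exact Cardinal.mul_le_of_le hκ hX h2
  have hGP : ∀ y ∈ Set.range (fun w : W => (Sum.inl (w, false) : A)),
      m (ordZero κ) ≠ y ∧ P s(m (ordZero κ), y) = Set.univ := by
    rintro _ ⟨w, rfl⟩
    refine ⟨hmf _ _, Set.eq_univ_of_forall fun c => ⟨fun α h => ?_, fun α _ h => ?_⟩⟩
    · rcases Sym2.eq_iff.1 h with ⟨h1, _⟩ | ⟨h1, _⟩
      · exact absurd h1 (hml _ _).1
      · exact absurd h1 (hml _ _).2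
    · rcases Sym2.eq_iff.1 h with ⟨_, h1⟩ | ⟨_, h1⟩ <;> exact absurd h1.symm (hmf _ _)
  have hP : ∀ x y c, c ∉ P s(x, y) → (t x = 0 ∧ t y = 0) ∨ x = m (ordZero κ) ∨ y = m (ordZero κ) := by
    intro x y c hc
    by_contra hcon
    push Not at hcon
    apply hc
    refine ⟨fun α h => ?_, fun α _ h => ?_⟩
    · exfalso
      rcases Sym2.eq_iff.1 h with ⟨rfl, rfl⟩ | ⟨rfl, rfl⟩ <;> exact hcon.1 rfl rfl
    · exfalso
      rcases Sym2.eq_iff.1 h with ⟨rfl, rfl⟩ | ⟨rfl, rfl⟩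
      · exact hcon.2.1 rfl
      · exact hcon.2.2 rfl
  obtain ⟨B, F, hB, hF, hPath⟩ := core κ hκ hA hC t ht (m (ordZero κ)) (by rw [tm]; rfl) P hP _ hG
    (m (ordZero κ)) hGP
  refine ⟨A, B, e, l₁, l₂, m, F, hA, hB, l1inj, l2inj, hl, minj, hml, hcol, hF, ?_, ?_, ?_⟩
  · intro α c
    rw [hPath _ _ (hl α α)]
    constructor
    · intro h; exact h.1 α rfl
    · intro h
      refine ⟨fun α' h' => ?_, fun α' _ h' => ?_⟩
      · rcases Sym2.eq_iff.1 h' with ⟨h1, _⟩ | ⟨h1, _⟩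
        · rwa [← l1inj h1]
        · exact absurd h1 (hl _ _)
      · rcases Sym2.eq_iff.1 h' with ⟨h1, _⟩ | ⟨h1, _⟩
        · exact absurd h1.symm (hml _ _).1
        · exact absurd h1.symm (hml _ _).1
  · intro α hα c
    have hne : ordZero κ ≠ α := by
      rintro rfl
      exact lt_irrefl _ hα
    rw [hPath _ _ (fun h => hne (minj h))]
    constructor
    · intro h; exact h.2 α hα rfl
    · intro h
      refine ⟨fun α' h' => ?_, fun α' hα' h' => ?_⟩
      · rcases Sym2.eq_iff.1 h' with ⟨h1, _⟩ | ⟨h1, _⟩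
        · exact absurd h1 (hml _ _).1
        · exact absurd h1 (hml _ _).2
      · have := minj (Sym2.congr_right.1 h')
        rwa [← this]
  · intro a a' hne h1 h2 c
    rw [hPath _ _ hne]
    refine ⟨fun α' h' => ?_, fun α' hα' h' => ?_⟩
    · exfalso
      apply h1 α'
      rcases Sym2.eq_iff.1 h' with ⟨rfl, rfl⟩ | ⟨rfl, rfl⟩
      · rfl
      · exact Set.pair_comm _ _
    · exfalso
      apply h2 α' hα'
      rcases Sym2.eq_iff.1 h' with ⟨rfl, rfl⟩ | ⟨rfl, rfl⟩
      · rfl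
      · exact Set.pair_comm _ _
end

section
/- Let κ be an infinite cardinal and suppose (A, B, C, F, C₀, e, l₁, l₂, m, S) and (A', B', C', F', C₀', e', l₁', l₂', m', S') are two tuples each satisfying the Step-II conditions for κ: the Step-I data and conditions (F satisfies (*); #A = #B = κ⁺, #C = κ; C₀ ⊆ C with #C₀ = #(C \ C₀) = κ; e a bijection from ordinals below κ onto C₀; l₁, l₂ with pairwise distinct values and the prescribed 2-path spectrum on each pair l₁ α, l₂ α), together with an injective m from the ordinals below κ⁺ into A, range disjoint from the l-points, pairwise distinct subsets S_α ⊆ C₀ (0 < α < κ⁺) with #S_α = #(C₀ \ S_α) = κ, such that for 0 < α < κ⁺ a monochromatic 2-path on m 0, m α colored c exists exactly when c ∈ S_α, and all other pairs of distinct points of A admit monochromatic 2-paths in every color not thus forbidden. If σ : A ≃ A', τ : B ≃ B', ρ : C ≃ C' are bijections with ρ (F a b) = F' (σ a) (τ b) for all a, b, then σ (m 0) = m' 0, σ maps the range of m onto the range of m', and whenever σ (m α) = m' α' with 0 < α, α' < κ⁺, then ρ maps S_α onto S'_{α'}. -/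
universe u

/-- The data of a Step-II model: a coloring `F`, the distinguished color set
`C₀` enumerated by `e`, the pairs `l₁ α, l₂ α`, the points `m α`, and the
coded subsets `S α ⊆ C₀`. -/
structure StepIIData (κ : Cardinal.{u}) (A B C : Type u) where
  F : A → B → C
  C₀ : Set C
  e : {o : Ordinal.{u} // o < κ.ord} ≃ C₀
  l₁ : {o : Ordinal.{u} // o < κ.ord} → A
  l₂ : {o : Ordinal.{u} // o < κ.ord} → A
  m : {o : Ordinal.{u} // o < (Order.succ κ).ord} → A
  S : {o : Ordinal.{u} // o < (Order.succ κ).ord} → Set C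

/-- The Step-II conditions (Lemma `Step2` of the paper). -/
def StepIIConds (κ : Cardinal.{u}) {A B C : Type u} (d : StepIIData κ A B C) : Prop :=
  Cardinal.mk A = Order.succ κ ∧ Cardinal.mk B = Order.succ κ ∧
  Cardinal.mk C = κ ∧
  Cardinal.mk d.C₀ = κ ∧ Cardinal.mk ↥(d.C₀ᶜ) = κ ∧
  Function.Injective d.l₁ ∧ Function.Injective d.l₂ ∧
  (∀ α β, d.l₁ α ≠ d.l₂ β) ∧
  Function.Injective d.m ∧
  (∀ γ α, d.m γ ≠ d.l₁ α ∧ d.m γ ≠ d.l₂ α) ∧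
  (∀ α, 0 < α.1 → d.S α ⊆ d.C₀) ∧
  (∀ α β, 0 < α.1 → 0 < β.1 → α ≠ β → d.S α ≠ d.S β) ∧
  (∀ α, 0 < α.1 → Cardinal.mk (d.S α) = κ) ∧
  (∀ α, 0 < α.1 → Cardinal.mk ↥(d.C₀ \ d.S α) = κ) ∧
  NoMonoK22 d.F ∧
  (∀ (α : {o : Ordinal.{u} // o < κ.ord}) (c : C),
    (∃ b : B, d.F (d.l₁ α) b = c ∧ d.F (d.l₂ α) b = c) ↔
      (c ∉ d.C₀ ∨ ∃ β, α < β ∧ c = (d.e β : C))) ∧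
  (∀ α, 0 < α.1 → ∀ c : C,
    (∃ b : B, d.F (d.m (ordZero κ)) b = c ∧ d.F (d.m α) b = c) ↔ c ∈ d.S α) ∧
  (∀ a a' : A, a ≠ a' →
    (∀ α, ({a, a'} : Set A) ≠ {d.l₁ α, d.l₂ α}) →
    (∀ α, 0 < α.1 → ({a, a'} : Set A) ≠ {d.m (ordZero κ), d.m α}) →
    ∀ c : C, ∃ b : B, d.F a b = c ∧ d.F a' b = c)

def BadPair {A B C : Type*} (F : A → B → C) (a a' : A) : Prop :=
  a ≠ a' ∧ ∃ c, ¬ ∃ b, F a b = c ∧ F a' b = c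

lemma badPair_iso {A B C A' B' C' : Type*} {F : A → B → C} {F' : A' → B' → C'}
    (σ : A ≃ A') (τ : B ≃ B') (ρ : C ≃ C')
    (hiso : ∀ (a : A) (b : B), ρ (F a b) = F' (σ a) (τ b)) (a a' : A) :
    BadPair F' (σ a) (σ a') ↔ BadPair F a a' := by
  unfold BadPair
  rw [ρ.symm.exists_congr_left]
  simp only [τ.symm.exists_congr_left, Equiv.symm_symm, ← hiso, ne_eq, EmbeddingLike.apply_eq_iff_eq]

lemma pair_cases {A : Type*} {a x p q : A} (h : ({a, x} : Set A) = {p, q}) :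
    (a = p ∧ x = q) ∨ (a = q ∧ x = p) := by
  rwa [Set.pair_eq_pair_iff] at h

lemma badPair_cases {κ : Cardinal.{u}} {A B C : Type u} {d : StepIIData κ A B C}
    (hd : StepIIConds κ d) {a x : A} (h : BadPair d.F a x) :
    (∃ α, (a = d.l₁ α ∧ x = d.l₂ α) ∨ (a = d.l₂ α ∧ x = d.l₁ α)) ∨
    (∃ α, 0 < α.1 ∧ ((a = d.m (ordZero κ) ∧ x = d.m α) ∨ (a = d.m α ∧ x = d.m (ordZero κ)))) := by
  obtain ⟨-, -, -, -, -, -, -, -, -, -, -, -, -, -, -, -, -, hall⟩ := hd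
  obtain ⟨hne, c, hc⟩ := h
  by_contra hcon
  push Not at hcon
  refine hc (hall a x hne ?_ ?_ c)
  · intro α he
    have := hcon.1 α
    have := pair_cases he
    tauto
  · intro α h0 he
    have := hcon.2 α h0
    have := pair_cases he
    tauto

lemma badPair_m {κ : Cardinal.{u}} (hκ : Cardinal.aleph0 ≤ κ) {A B C : Type u}
    {d : StepIIData κ A B C} (hd : StepIIConds κ d) (x : A) :
    BadPair d.F (d.m (ordZero κ)) x ↔ ∃ α, 0 < α.1 ∧ x = d.m α := by
  have hd0 := hd
  obtain ⟨-, -, -, -, -, -, -, -, hm, hml, -, -, -, hS, -, -, hp, -⟩ := hd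
  constructor
  · intro h
    rcases badPair_cases hd0 h with ⟨α, h | h⟩ | ⟨α, h0, h | h⟩
    · exact absurd h.1 (hml _ _).1
    · exact absurd h.1 (hml _ _).2
    · exact ⟨α, h0, h.2⟩
    · have := hm h.1
      subst this
      exact absurd h0 (lt_irrefl _)
  · rintro ⟨α, h0, rfl⟩
    refine ⟨fun h => ?_, ?_⟩
    · have := hm h
      subst this
      exact absurd h0 (lt_irrefl _)
    · have hne : Cardinal.mk ↥(d.C₀ \ d.S α) ≠ 0 := by
        rw [hS α h0]
        exact (Cardinal.aleph0_pos.trans_le hκ).ne'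
      obtain ⟨c, hc⟩ := Cardinal.mk_ne_zero_iff.1 hne
      exact ⟨c, fun h => hc.2 ((hp α h0 c).1 h)⟩

lemma badPair_two {κ : Cardinal.{u}} {A B C : Type u}
    {d : StepIIData κ A B C} (hd : StepIIConds κ d) {a x y : A} (hxy : x ≠ y)
    (hx : BadPair d.F a x) (hy : BadPair d.F a y) : a = d.m (ordZero κ) := by
  have h1 := badPair_cases hd hx
  have h2 := badPair_cases hd hy
  obtain ⟨-, -, -, -, -, hl1, hl2, hl, hm, hml, -⟩ := hd
  rcases h1 with ⟨α, ⟨rfl, rfl⟩ | ⟨rfl, rfl⟩⟩ | ⟨α, h0, ⟨rfl, rfl⟩ | ⟨rfl, rfl⟩⟩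
  · rcases h2 with ⟨β, h | h⟩ | ⟨β, h0, h | h⟩
    · rw [← hl1 h.1] at h
      exact absurd h.2.symm hxy
    · exact absurd h.1 (hl _ _)
    · exact h.1
    · exact absurd h.1.symm (hml _ _).1
  · rcases h2 with ⟨β, h | h⟩ | ⟨β, h0, h | h⟩
    · exact absurd h.1.symm (hl _ _)
    · rw [← hl2 h.1] at h
      exact absurd h.2.symm hxy
    · exact h.1
    · exact absurd h.1.symm (hml _ _).2
  · rfl
  · rcases h2 with ⟨β, h | h⟩ | ⟨β, h0, h | h⟩
    · exact absurd h.1 (hml _ _).1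
    · exact absurd h.1 (hml _ _).2
    · exact h.1
    · exact absurd h.2.symm hxy

lemma range_m {κ : Cardinal.{u}} (hκ : Cardinal.aleph0 ≤ κ) {A B C : Type u}
    {d : StepIIData κ A B C} (hd : StepIIConds κ d) (x : A) :
    x ∈ Set.range d.m ↔ x = d.m (ordZero κ) ∨ BadPair d.F (d.m (ordZero κ)) x := by
  rw [badPair_m hκ hd]
  constructor
  · rintro ⟨α, rfl⟩
    rcases eq_or_ne α (ordZero κ) with rfl | h
    · exact Or.inl rfl
    · refine Or.inr ⟨α, ?_, rfl⟩
      rw [pos_iff_ne_zero]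
      exact fun h0 => h (Subtype.ext h0)
  · rintro (rfl | ⟨α, -, rfl⟩) <;> exact ⟨_, rfl⟩

theorem stmt17 (κ : Cardinal.{u}) (hκ : Cardinal.aleph0 ≤ κ)
    {A B C A' B' C' : Type u}
    (d : StepIIData κ A B C) (d' : StepIIData κ A' B' C')
    (hd : StepIIConds κ d) (hd' : StepIIConds κ d')
    (σ : A ≃ A') (τ : B ≃ B') (ρ : C ≃ C')
    (hiso : ∀ (a : A) (b : B), ρ (d.F a b) = d'.F (σ a) (τ b)) :
    σ (d.m (ordZero κ)) = d'.m (ordZero κ) ∧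
    σ '' Set.range d.m = Set.range d'.m ∧
    (∀ α α', 0 < α.1 → 0 < α'.1 → σ (d.m α) = d'.m α' →
      ρ '' d.S α = d'.S α') := by
  have hlim : ∀ n : ℕ, (n : Ordinal.{u}) < (Order.succ κ).ord := fun n => by
    rw [Cardinal.lt_ord, Ordinal.card_nat]
    exact (Cardinal.natCast_lt_aleph0.trans_le hκ).trans (Order.lt_succ κ)
  have h0 : σ (d.m (ordZero κ)) = d'.m (ordZero κ) := by
    have hm : Function.Injective d.m := hd.2.2.2.2.2.2.2.2.1
    have hne : d.m ⟨(1 : ℕ), hlim 1⟩ ≠ d.m ⟨(2 : ℕ), hlim 2⟩ := fun h => by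
      have := congrArg Subtype.val (hm h)
      have := Nat.cast_injective (R := Ordinal.{u}) this
      omega
    refine badPair_two hd' (σ.injective.ne hne) ?_ ?_
    · rw [badPair_iso σ τ ρ hiso, badPair_m hκ hd]
      exact ⟨_, by simp, rfl⟩
    · rw [badPair_iso σ τ ρ hiso, badPair_m hκ hd]
      exact ⟨_, by simp, rfl⟩
  refine ⟨h0, ?_, ?_⟩
  · ext y
    obtain ⟨x, rfl⟩ := σ.surjective y
    rw [σ.injective.mem_set_image, range_m hκ hd, range_m hκ hd', ← h0,
      badPair_iso σ τ ρ hiso, σ.injective.eq_iff]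
  · intro α α' hα hα' h
    obtain ⟨-, -, -, -, -, -, -, -, -, -, -, -, -, -, -, -, hp, -⟩ := hd
    obtain ⟨-, -, -, -, -, -, -, -, -, -, -, -, -, -, -, -, hp', -⟩ := hd'
    ext y
    obtain ⟨c, rfl⟩ := ρ.surjective y
    rw [ρ.injective.mem_set_image, ← hp α hα, ← hp' α' hα', ← h0, ← h]
    simp only [τ.symm.exists_congr_left, Equiv.symm_symm, ← hiso, EmbeddingLike.apply_eq_iff_eq]
end

section
/- For every infinite cardinal κ, there exist types A, B, C with #A = #B = κ⁺ and #C = κ, an index type I with #I = 2^(κ⁺), and a family of functions F_i : A → B → C (i ∈ I) such that: each F_i satisfies (*) (no monochromatic K_{2,2}) and is C-maximal (both A-inextensible and B-inextensible); and for all i ≠ j in I, F_i and F_j are non-isomorphic, i.e., there are no bijections σ : A ≃ A, τ : B ≃ B, ρ : C ≃ C with ρ (F_i a b) = F_j (σ a) (τ b) for all a ∈ A and b ∈ B. In particular there are 2^(κ⁺) pairwise non-isomorphic C-maximal colorings of the complete bipartite graph on two sets of size κ⁺ by κ colors with no monochromatic K_{2,2}. -/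
universe u

open Classical in
theorem rec_aux {L C : Type*} [LinearOrder L] [WellFoundedLT L] [Inhabited C]
    (Φ : L → (L → L → C) → L → C)
    (hΦ : ∀ s G G', (∀ v < s, ∀ w < s, G v w = G' v w) → Φ s G = Φ s G') :
    ∃ F : L → L → C, (∀ s t, F s t = F t s) ∧ ∀ s, ∀ t ≤ s, F s t = Φ s F t := by
  let step : (s : L) → ((v : L) → v < s → L → C) → L → C := fun s ih =>
    Φ s (fun v w => if hv : v < s ∧ w < s then
      (if w ≤ v then ih v hv.1 w else ih w hv.2 v) else default)
  have wf : WellFounded (fun a b : L => a < b) := wellFounded_lt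
  let row : L → L → C := wf.fix step
  have hrow : ∀ s, row s = step s (fun v _ => row v) := fun s => wf.fix_eq step s
  let F : L → L → C := fun s t => if t ≤ s then row s t else row t s
  refine ⟨F, ?_, ?_⟩
  · intro s t
    simp only [F]
    rcases lt_trichotomy s t with h | h | h
    · simp [h.le, not_le.2 h]
    · subst h; rfl
    · simp [h.le, not_le.2 h]
  · intro s t hts
    have h1 : F s t = row s t := by simp [F, hts]
    rw [h1, hrow]
    simp only [step]
    apply congrFun
    apply hΦ
    intro v hv w hw
    simp [F, hv, hw]

/-- A flag used to pick fill colors different from a given color. -/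
def bitOf {K : Type*} : K × Bool ⊕ Fin 4 → Bool
  | Sum.inl p => !p.2
  | Sum.inr _ => false

theorem bitOf_ne {K : Type*} (c : K × Bool ⊕ Fin 4) (k : K) : Sum.inl (k, bitOf c) ≠ c := by
  rcases c with ⟨a, b⟩ | j
  · simp [bitOf]
  · simp

open Classical in
theorem construct {L K : Type*} [LinearOrder L] [WellFoundedLT L] [Inhabited K]
    (e : L → L → K) (he : ∀ s, Set.InjOn (e s) (Set.Iic s))
    (req : L → Option (L × L × (K × Bool ⊕ Fin 4)))
    (hreq : ∀ p s₀, ∃ s, s₀ < s ∧ req s = some p)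
    (forb : L → L → (K × Bool ⊕ Fin 4) → Prop)
    (hsymm : ∀ x y c, forb x y c → forb y x c)
    (hforb : ∀ x y c, forb x y c → req x = none ∧ req y = none ∧ ∃ k, c = Sum.inr k) :
    ∃ F : L → L → (K × Bool ⊕ Fin 4), (∀ s t, F s t = F t s) ∧ NoMonoK22 F ∧
      ∀ x y, x ≠ y → ∀ c, (∃ v, F x v = c ∧ F y v = c) ↔ ¬ forb x y c := by
  let Good : L → (L → L → (K × Bool ⊕ Fin 4)) → L → L → (K × Bool ⊕ Fin 4) → Prop :=
    fun s G x y c => x ≠ y ∧ x < s ∧ y < s ∧ ¬ forb x y c ∧ ¬ ∃ v < s, G v x = c ∧ G v y = c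
  let Φ : L → (L → L → (K × Bool ⊕ Fin 4)) → L → (K × Bool ⊕ Fin 4) := fun s G t =>
    match req s with
    | none => Sum.inl (e s t, false)
    | some (x, y, c) => if Good s G x y c then
        (if t = x ∨ t = y then c else Sum.inl (e s t, bitOf c)) else Sum.inl (e s t, false)
  obtain ⟨F, hF, hrow⟩ := rec_aux Φ (by
    intro s G G' h
    funext t
    simp only [Φ]
    rcases hr : req s with _ | ⟨x, y, c⟩
    · rfl
    · have : Good s G x y c ↔ Good s G' x y c := by
        simp only [Good]
        refine and_congr_right fun _ => and_congr_right fun hx => and_congr_right fun hy =>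
          and_congr_right fun _ => not_congr (exists_congr fun v => and_congr_right fun hv => ?_)
        rw [h v hv x hx, h v hv y hy]
      simp only [this])
  have key : ∀ s, (∀ t ≤ s, F s t = Sum.inl (e s t, false)) ∨
      ∃ x y c, req s = some (x, y, c) ∧ Good s F x y c ∧
        ∀ t ≤ s, F s t = if t = x ∨ t = y then c else Sum.inl (e s t, bitOf c) := by
    intro s
    rcases hr : req s with _ | ⟨x, y, c⟩
    · left
      intro t ht
      rw [hrow s t ht]; simp only [Φ, hr]
    · by_cases hg : Good s F x y c
      · right
        refine ⟨x, y, c, rfl, hg, ?_⟩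
        intro t ht
        rw [hrow s t ht]; simp only [Φ, hr, if_pos hg]
      · left
        intro t ht
        rw [hrow s t ht]; simp only [Φ, hr, if_neg hg]
  have coll : ∀ s t t' c, t ≤ s → t' ≤ s → t ≠ t' → F s t = c → F s t' = c →
      t < s ∧ t' < s ∧ ¬ forb t t' c ∧ ¬ ∃ v < s, F v t = c ∧ F v t' = c := by
    intro s t t' c ht ht' hne h1 h2
    rcases key s with h | ⟨x, y, c', hr, ⟨hxy, hx, hy, hfb, hv⟩, h⟩
    · rw [h t ht] at h1
      rw [h t' ht', ← h1] at h2
      simp only [Sum.inl.injEq, Prod.mk.injEq, and_true] at h2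
      exact absurd (he s ht' ht h2).symm hne
    · rw [h t ht] at h1
      rw [h t' ht'] at h2
      split_ifs at h1 with a1
      · subst h1
        split_ifs at h2 with a2
        · rcases a1 with rfl | rfl <;> rcases a2 with rfl | rfl
          · exact absurd rfl hne
          · exact ⟨hx, hy, hfb, hv⟩
          · refine ⟨hy, hx, fun q => hfb (hsymm _ _ _ q), ?_⟩
            rintro ⟨v, q, q1, q2⟩
            exact hv ⟨v, q, q2, q1⟩
          · exact absurd rfl hne
        · exact absurd h2 (bitOf_ne _ _)
      · split_ifs at h2 with a2
        · subst h2
          exact absurd h1 (bitOf_ne _ _)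
        · rw [← h1] at h2
          simp only [Sum.inl.injEq, Prod.mk.injEq, and_true] at h2
          exact absurd (he s ht' ht h2).symm hne
  have inrc : ∀ s t k, t ≤ s → F s t = Sum.inr k → req s ≠ none := by
    intro s t k ht h hn
    rcases key s with h' | ⟨x, y, c', hr, _⟩
    · rw [h' t ht] at h; simp at h
    · rw [hn] at hr; simp at hr
  refine ⟨F, hF, ?_, ?_⟩
  · have main : ∀ (a₁ a₂ b₁ b₂ : L) c, a₁ ≤ a₂ → b₁ ≤ a₂ → b₂ ≤ a₂ → a₁ ≠ a₂ → b₁ ≠ b₂ →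
        F a₁ b₁ = c → F a₁ b₂ = c → F a₂ b₁ = c → F a₂ b₂ = c → False := by
      intro a₁ a₂ b₁ b₂ c h1 h2 h3 hne hne' e1 e2 e3 e4
      exact (coll a₂ b₁ b₂ c h2 h3 hne' e3 e4).2.2.2 ⟨a₁, lt_of_le_of_ne h1 hne, e1, e2⟩
    rintro ⟨a₁, a₂, b₁, b₂, ha, hb, e1, e2, e3⟩
    have f1 := hF a₁ b₁
    have f2 := hF a₁ b₂
    have f3 := hF a₂ b₁
    have f4 := hF a₂ b₂
    generalize hc : F a₁ b₁ = c at *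
    rcases le_total a₁ a₂ with h | h <;> rcases le_total b₁ b₂ with h' | h'
    · rcases le_total a₂ b₂ with g | g
      · exact main b₁ b₂ a₁ a₂ c h' (h.trans g) g hb ha (by grind) (by grind) (by grind) (by grind)
      · exact main a₁ a₂ b₁ b₂ c h (h'.trans g) g ha hb (by grind) (by grind) (by grind) (by grind)
    · rcases le_total a₂ b₁ with g | g
      · exact main b₂ b₁ a₁ a₂ c h' (h.trans g) g hb.symm ha
          (by grind) (by grind) (by grind) (by grind)
      · exact main a₁ a₂ b₂ b₁ c h (h'.trans g) g ha hb.symm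
          (by grind) (by grind) (by grind) (by grind)
    · rcases le_total a₁ b₂ with g | g
      · exact main b₁ b₂ a₂ a₁ c h' (h.trans g) g hb ha.symm
          (by grind) (by grind) (by grind) (by grind)
      · exact main a₂ a₁ b₁ b₂ c h (h'.trans g) g ha.symm hb
          (by grind) (by grind) (by grind) (by grind)
    · rcases le_total a₁ b₁ with g | g
      · exact main b₂ b₁ a₂ a₁ c h' (h.trans g) g hb.symm ha.symm
          (by grind) (by grind) (by grind) (by grind)
      · exact main a₂ a₁ b₂ b₁ c h (h'.trans g) g ha.symm hb.symm
          (by grind) (by grind) (by grind) (by grind)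
  · intro x y hxy c
    constructor
    · rintro ⟨v, h1, h2⟩ hf
      obtain ⟨rx, ry, k, rfl⟩ := hforb x y c hf
      have xv : x < v := by
        by_contra h
        exact inrc x v k (not_lt.1 h) h1 rx
      have yv : y < v := by
        by_contra h
        exact inrc y v k (not_lt.1 h) h2 ry
      rw [hF] at h1 h2
      exact (coll v x y _ xv.le yv.le hxy h1 h2).2.2.1 hf
    · intro hf
      by_contra hno
      obtain ⟨s, hs, hr⟩ := hreq (x, y, c) (max x y)
      have hx : x < s := (le_max_left _ _).trans_lt hs
      have hy : y < s := (le_max_right _ _).trans_lt hs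
      have hg : Good s F x y c := by
        refine ⟨hxy, hx, hy, hf, ?_⟩
        rintro ⟨v, _, h1, h2⟩
        exact hno ⟨v, by rw [hF]; exact h1, by rw [hF]; exact h2⟩
      apply hno
      refine ⟨s, ?_, ?_⟩
      · rw [hF, hrow s x hx.le]; simp only [Φ, hr, if_pos hg, true_or, if_true]
      · rw [hF, hrow s y hy.le]; simp only [Φ, hr, if_pos hg, or_true, if_true]

open Classical in
/-- The coding pattern: number of missing colors for each pair of code vertices. -/
noncomputable def codeM {L : Type*} [LinearOrder L] (X : Set L) : L × Bool → L × Bool → ℕ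
  | (a, false), (b, true) => if a < b then 1 else if a = b then (if a ∈ X then 2 else 3) else 0
  | (b, true), (a, false) => if a < b then 1 else if a = b then (if a ∈ X then 2 else 3) else 0
  | (_, false), (_, false) => 4
  | (_, true), (_, true) => 0

theorem codeM_symm {L : Type*} [LinearOrder L] (X : Set L) (d d' : L × Bool) :
    codeM X d d' = codeM X d' d := by
  rcases d with ⟨a, _ | _⟩ <;> rcases d' with ⟨b, _ | _⟩ <;> simp [codeM]

theorem codeM_le {L : Type*} [LinearOrder L] (X : Set L) (d d' : L × Bool) :
    codeM X d d' ≤ 4 := by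
  rcases d with ⟨a, _ | _⟩ <;> rcases d' with ⟨b, _ | _⟩ <;> simp only [codeM] <;>
    (try split_ifs) <;> omega

/-- The set of missing colors of a pair. -/
def missing {A B C : Type*} (F : A → B → C) (x y : A) : Set C :=
  {c | ¬ ∃ v, F x v = c ∧ F y v = c}

theorem missing_iso {A B C : Type*} {F G : A → B → C} (σ : A ≃ A) (τ : B ≃ B) (ρ : C ≃ C)
    (h : ∀ a b, ρ (F a b) = G (σ a) (τ b)) (x y : A) :
    (missing G (σ x) (σ y)).ncard = (missing F x y).ncard := by
  have : missing G (σ x) (σ y) = ρ '' missing F x y := by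
    ext c
    rw [Equiv.image_eq_preimage_symm]
    simp only [missing, Set.mem_ofPred_eq, Set.mem_preimage, not_iff_not]
    rw [← τ.exists_congr_right]
    simp only [← h, Equiv.eq_symm_apply]
  rw [this, Set.ncard_image_of_injective _ ρ.injective]

theorem decode {L C : Type*} [LinearOrder L] [Nontrivial L]
    (cd : L × Bool → L) (hcd : Function.Injective cd)
    (X Y : Set L) (F G : L → L → C)
    (hF : ∀ d d', d ≠ d' → (missing F (cd d) (cd d')).ncard = codeM X d d')
    (hG : ∀ d d', d ≠ d' → (missing G (cd d) (cd d')).ncard = codeM Y d d')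
    (hG0 : ∀ x y, x ≠ y → (missing G x y).ncard ≠ 0 → ∃ d d', x = cd d ∧ y = cd d')
    (σ : L ≃ L) (hσ : ∀ x y, (missing G (σ x) (σ y)).ncard = (missing F x y).ncard) :
    ∃ π : L → L, StrictMono π ∧ (∀ a, σ (cd (a, false)) = cd (π a, false)) ∧
      ∀ a, a ∈ X ↔ π a ∈ Y := by
  have tr : ∀ d d', d ≠ d' → codeM X d d' ≠ 0 → ∃ f f', f ≠ f' ∧ σ (cd d) = cd f ∧ σ (cd d') = cd f' ∧
      codeM Y f f' = codeM X d d' := by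
    intro d d' hne h0
    have hne' : σ (cd d) ≠ σ (cd d') := fun h => hne (hcd (σ.injective h))
    have h1 := hσ (cd d) (cd d')
    rw [hF d d' hne] at h1
    obtain ⟨f, f', h2, h3⟩ := hG0 _ _ hne' (by rw [h1]; exact h0)
    have hff : f ≠ f' := by
      rintro rfl; exact hne' (h2.trans h3.symm)
    refine ⟨f, f', hff, h2, h3, ?_⟩
    rw [h2, h3, hG f f' hff] at h1
    exact h1
  have h0 : ∀ a, ∃ a', σ (cd (a, false)) = cd (a', false) := by
    intro a
    obtain ⟨b, hb⟩ := exists_ne a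
    obtain ⟨⟨f, i⟩, ⟨f', i'⟩, -, h1, -, h2⟩ := tr (a, false) (b, false) (by simp [hb.symm])
      (by simp [codeM])
    refine ⟨f, ?_⟩
    rw [h1]
    cases i
    · rfl
    · exfalso
      cases i' <;> simp only [codeM] at h2 <;> (try split_ifs at h2) <;> omega
  choose π hπ using h0
  have h1 : ∀ a, σ (cd (a, true)) = cd (π a, true) ∧ (a ∈ X ↔ π a ∈ Y) := by
    intro a
    obtain ⟨f, ⟨f', i'⟩, -, h1, h2, h3⟩ := tr (a, false) (a, true) (by simp)
      (by simp only [codeM, lt_irrefl, if_false, if_true]; split_ifs <;> omega)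
    rw [hπ] at h1
    obtain rfl := hcd h1
    rw [h2]
    cases i'
    · exfalso
      simp only [codeM, lt_irrefl, if_false, if_true] at h3
      split_ifs at h3 <;> omega
    · simp only [codeM, lt_irrefl, if_false, if_true] at h3
      split_ifs at h3 with q1 q2 q3 q4 q5 q6 q7
      all_goals first
        | omega
        | (rw [← q3]; exact ⟨rfl, by tauto⟩)
  refine ⟨π, ?_, hπ, fun a => (h1 a).2⟩
  intro a b hab
  obtain ⟨f, f', -, h2, h3, h4⟩ := tr (a, false) (b, true) (by simp) (by simp [codeM, hab])
  rw [hπ] at h2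
  rw [(h1 b).1] at h3
  obtain rfl := hcd h2
  obtain rfl := hcd h3
  simp only [codeM, hab, if_true] at h4
  split_ifs at h4 <;> first | assumption | omega

open Cardinal in
theorem stmt18 (κ : Cardinal.{u}) (hκ : Cardinal.aleph0 ≤ κ) :
    ∃ (A B C I : Type u) (F : I → A → B → C),
      Cardinal.mk A = Order.succ κ ∧ Cardinal.mk B = Order.succ κ ∧
      Cardinal.mk C = κ ∧
      Cardinal.mk I = 2 ^ Order.succ κ ∧
      (∀ i, NoMonoK22 (F i) ∧ AInextensible (F i) ∧ BInextensible (F i)) ∧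
      (∀ i j, i ≠ j →
        ¬ ∃ (σ : A ≃ A) (τ : B ≃ B) (ρ : C ≃ C),
            ∀ (a : A) (b : B), ρ (F i a b) = F j (σ a) (τ b)) := by
  let L : Type u := (Order.succ κ).ord.ToType
  let K : Type u := κ.out
  let C : Type u := K × Bool ⊕ Fin 4
  have hs : ℵ₀ ≤ Order.succ κ := hκ.trans (Order.le_succ κ)
  have hlt : κ < Order.succ κ := Order.lt_succ κ
  have hL : #L = Order.succ κ := Cardinal.mk_ord_toType _
  have hK : #K = κ := Cardinal.mk_out κ
  have hC : #C = κ := by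
    have : #C = κ * 2 + 4 := by simp [C, hK]
    have h2 : (2 : Cardinal.{u}) ≤ κ := (Cardinal.ofNat_lt_aleph0 (n := 2)).le.trans hκ
    have h4 : (4 : Cardinal.{u}) ≤ κ := (Cardinal.ofNat_lt_aleph0 (n := 4)).le.trans hκ
    rw [this, Cardinal.mul_eq_left hκ h2 (by simp), Cardinal.add_eq_left hκ h4]
  have : Infinite L := Cardinal.infinite_iff.2 (hL ▸ hs)
  have : Infinite K := Cardinal.infinite_iff.2 (hK ▸ hκ)
  have : Inhabited K := Classical.inhabited_of_nonempty inferInstance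
  have hIic : ∀ s : L, #(Set.Iic s) ≤ κ := by
    intro s
    have h := Cardinal.mk_Iic_lt s (by rw [hL]; simp [L]) (by rw [hL]; exact hs)
    rw [hL] at h
    exact Order.lt_succ_iff.1 h
  have hinj : ∀ s : L, ∃ f : L → K, Set.InjOn f (Set.Iic s) := by
    intro s
    have : #(Set.Iic s) ≤ #K := by rw [hK]; exact hIic s
    obtain ⟨f⟩ := this
    refine ⟨fun t => if h : t ≤ s then f ⟨t, h⟩ else default, ?_⟩
    intro t ht t' ht' h
    simp only [Set.mem_Iic] at ht ht'
    simp only [ht, ht', dif_pos] at h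
    exact congrArg Subtype.val (f.injective h)
  choose e he using hinj
  have hφ : #L = #((L × Bool) ⊕ (L × (L × L × C))) := by
    have h2 : (2 : Cardinal.{u}) ≤ Order.succ κ := (Cardinal.ofNat_lt_aleph0 (n := 2)).le.trans hs
    have hz : Order.succ κ ≠ 0 := (hlt.trans_le' (zero_le)).ne'
    have hk0 : κ ≠ 0 := (Cardinal.aleph0_pos.trans_le hκ).ne'
    have e1 : #(L × Bool) = Order.succ κ := by
      have : #(L × Bool) = Order.succ κ * 2 := by simp [hL]
      rw [this, Cardinal.mul_eq_left hs h2 (by simp)]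
    have e2 : #(L × (L × L × C)) = Order.succ κ := by
      have : #(L × (L × L × C)) = Order.succ κ * (Order.succ κ * (Order.succ κ * κ)) := by
        rw [← Cardinal.mul_def, ← Cardinal.mul_def, ← Cardinal.mul_def, hL, hC]
      rw [this, Cardinal.mul_eq_left hs hlt.le hk0, Cardinal.mul_eq_self hs,
        Cardinal.mul_eq_self hs]
    rw [← Cardinal.add_def, e1, e2, hL, Cardinal.add_eq_self hs]
  obtain ⟨φ⟩ := Cardinal.eq.1 hφ
  let cd : L × Bool → L := fun d => φ.symm (Sum.inl d)
  have hcd : Function.Injective cd := φ.symm.injective.comp Sum.inl_injective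
  let req : L → Option (L × L × C) := fun s => (φ s).elim (fun _ => none) (fun p => some p.2)
  have hreq : ∀ p s₀, ∃ s, s₀ < s ∧ req s = some p := by
    intro p s₀
    by_contra hno
    push Not at hno
    have : ∀ i : L, φ.symm (Sum.inr (i, p)) ∈ Set.Iic s₀ := by
      intro i
      by_contra h
      exact hno _ (not_le.1 h) (by simp [req])
    have h2 : #L ≤ #(Set.Iic s₀) := by
      refine Cardinal.mk_le_of_injective (f := fun i => ⟨_, this i⟩) ?_
      intro i j hij
      simpa using hij
    exact absurd (h2.trans (hIic s₀)) (by rw [hL]; exact not_le.2 hlt)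
  let forb : Set L → L → L → C → Prop := fun X x y c =>
    ∃ d d' k, x = cd d ∧ y = cd d' ∧ c = Sum.inr k ∧ (k : ℕ) < codeM X d d'
  have hfs : ∀ X x y c, forb X x y c → forb X y x c := by
    rintro X x y c ⟨d, d', k, h1, h2, h3, h4⟩
    exact ⟨d', d, k, h2, h1, h3, by rwa [codeM_symm]⟩
  have hfr : ∀ X x y c, forb X x y c → req x = none ∧ req y = none ∧ ∃ k, c = Sum.inr k := by
    rintro X x y c ⟨d, d', k, rfl, rfl, rfl, h4⟩
    exact ⟨by simp [req, cd], by simp [req, cd], k, rfl⟩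
  have hcon := fun X => construct e he req hreq (forb X) (hfs X) (hfr X)
  choose F hFs hFK hFm using hcon
  have hmiss : ∀ X x y, x ≠ y → missing (F X) x y = {c | forb X x y c} := by
    intro X x y hxy
    ext c
    simp only [missing, Set.mem_ofPred_eq]
    rw [hFm X x y hxy c, not_not]
    rfl
  have hm1 : ∀ X d d', d ≠ d' → (missing (F X) (cd d) (cd d')).ncard = codeM X d d' := by
    intro X d d' hne
    rw [hmiss X _ _ (fun h => hne (hcd h))]
    have : {c | forb X (cd d) (cd d') c} =
        (Sum.inr : Fin 4 → C) '' {k | (k : ℕ) < codeM X d d'} := by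
      ext c
      constructor
      · rintro ⟨f, f', k, h1, h2, rfl, h4⟩
        obtain rfl := hcd h1
        obtain rfl := hcd h2
        exact ⟨k, h4, rfl⟩
      · rintro ⟨k, h4, rfl⟩
        exact ⟨d, d', k, rfl, rfl, rfl, h4⟩
    rw [this, Set.ncard_image_of_injective _ Sum.inr_injective]
    have h4 := codeM_le X d d'
    generalize codeM X d d' = n at h4
    rw [Set.ncard_eq_toFinset_card']
    interval_cases n <;> simp <;> decide
  have hm0 : ∀ X x y, x ≠ y → (missing (F X) x y).ncard ≠ 0 → ∃ d d', x = cd d ∧ y = cd d' := by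
    intro X x y hxy h
    rw [hmiss X x y hxy] at h
    obtain ⟨c, d, d', k, h1, h2, -⟩ := Set.nonempty_of_ncard_ne_zero h
    exact ⟨d, d', h1, h2⟩
  have hB : ∀ X, BInextensible (F X) := by
    intro X g
    obtain ⟨p₀⟩ : Nonempty (L × L × C) := inferInstance
    let n : L → L := fun i => φ.symm (Sum.inr (i, p₀))
    have hn : Function.Injective n := by
      intro i j hij
      simpa [n] using hij
    have : ¬ Function.Injective (g ∘ n) := by
      intro h
      have := Cardinal.mk_le_of_injective h
      rw [hL, hC] at this
      exact absurd this (not_le.2 hlt)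
    simp only [Function.Injective, not_forall] at this
    obtain ⟨i, j, hij, hne⟩ := this
    have hne' : n i ≠ n j := fun h => hne (hn h)
    have hnf : ¬ forb X (n i) (n j) (g (n i)) := by
      intro h
      have := (hfr X _ _ _ h).1
      simp [req, n] at this
    obtain ⟨v, h1, h2⟩ := (hFm X _ _ hne' _).2 hnf
    exact ⟨n i, n j, hne', v, h1.trans h2.symm, h2, hij⟩
  have hA : ∀ X, AInextensible (F X) := by
    intro X h
    obtain ⟨a₁, a₂, hne, b, h1, h2, h3⟩ := hB X h
    exact ⟨a₁, a₂, hne, b, by rw [hFs X b a₁, hFs X b a₂]; exact h1,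
      by rw [hFs X b a₂]; exact h2, h3⟩
  refine ⟨L, L, C, Set L, F, hL, hL, hC, by rw [Cardinal.mk_set, hL],
    fun X => ⟨hFK X, hA X, hB X⟩, ?_⟩
  rintro X Y hne ⟨σ, τ, ρ, h⟩
  apply hne
  have hi := missing_iso σ τ ρ h
  obtain ⟨π, hπ, h1, h2⟩ := decode cd hcd X Y (F X) (F Y) (hm1 X) (hm1 Y) (hm0 Y) σ hi
  obtain ⟨π', hπ', h1', h2'⟩ := decode cd hcd Y X (F Y) (F X) (hm1 Y) (hm1 X) (hm0 X) σ.symm (by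
    intro x y
    have := hi (σ.symm x) (σ.symm y)
    simpa using this.symm)
  have hid : ∀ a, π a = a := by
    intro a
    have e1 : π' (π a) = a := by
      have := h1' (π a)
      rw [← h1 a, Equiv.symm_apply_apply] at this
      exact (congrArg Prod.fst (hcd this)).symm
    apply le_antisymm
    · calc π a ≤ π' (π a) := hπ'.le_apply
        _ = a := e1
    · exact hπ.le_apply
  ext a
  rw [h2 a, hid a]
end
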